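/- In the sparse deconvolution model with μ_n = n^{ν−1} for some ν > 1/2, suppose: g is bounded above and g(θ) ≥ C_{g1} (θ²+1)^{−v_s} for all θ, for some v_s ≥ 1 and C_{g1} > 0; with v_1 the least integer ≥ v_s, g* is v_1 times continuously differentiable with |d^l g*(ω)/dω^l| ≤ C_{g2} |g*(ω)| for l = 1, …, v_1 and all ω; there exists ω_0 > 0 such that ρ(ω) = arg(φ*(ω)) is v_1 times continuously differentiable for |ω| ≥ ω_0 with all derivatives up to order v_1 bounded by ρ̄ < ∞; |g*(ω)| ≤ C_{g3} (ω²+1)^{−α/2} for all ω with α ≥ 0; and |φ*(ω)| ≥ C_{φ1} (ω²+1)^{−a/2} for all ω with a < α + 1/2. Then for all s ≥ 0, B > 0 there is a constant C > 0 (independent of n) such that, for all sufficiently large n, R_{n,μ_n}(Ω_s(B)) = inf over measurable estimators T of (Y_1,…,Y_n) of sup over probability densities f₀ ∈ Ω_s(B) (with ∫ |f₀*(ω) φ*(ω)| dω < ∞) of E(T − Φ_μ)² satisfies R_{n,μ_n}(Ω_s(B)) ≥ C · n^{−(2ν−1)(2s+2a−1)/(2s+2α)}. -/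

import Mathlib

open MeasureTheory Finset

/-- Fourier transform `t*(ω) = ∫ e^{iωx} t(x) dx` of a real-valued function. -/
noncomputable def ft (t : ℝ → ℝ) (ω : ℝ) : ℂ :=
  ∫ x : ℝ, Complex.exp (Complex.I * (ω : ℂ) * (x : ℂ)) * (t x : ℂ)

/-!
Le Cam's two-point method. Let `k` have Fourier transform `b(ω / m) φ*(ω) / |φ*(ω)|`, where `b` is
an even bump on `1 ≤ |u| ≤ 2`, let `γ` be a centred normal density of variance `(s + 1) / m²`, and
perturb a fixed normal density by `δ (|k| ⋆ γ)` and by `δ ((|k| + k) ⋆ γ)`, renormalised. Both are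
densities in the Sobolev ball once `δ m ^ (s + 1/2)` is small: `|k|` may be rough, and the damping
by `γ` at frequencies above `m` compensates for that.

The two densities differ by `δ (k ⋆ γ)`. Carrying the phase of `φ*`, this changes the functional
by at least a multiple of `δ ∫_{m ≤ |ω| ≤ 2m} |φ*|`, that is, of `δ m ^ (1 - a)`. It changes the
density of an observation by `μ δ Z` with `Z = g ⋆ (k ⋆ γ)`; the derivative bounds on `g*` and on
the phase turn into `∫ Z² (1 + y ^ (2v)) ≲ m ^ (1 - 2α)`, and since that density is at least a
multiple of `(1 + y ^ (2v))⁻¹`, the `χ²`-distance is at most a multiple of `(μ δ)² m ^ (1 - 2α)`.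
Choosing `m` and `δ` as powers of `n` that keep this of order `1 / n` gives the rate.
-/

namespace SparseDeconvolution

open scoped FourierTransform Convolution SchwartzMap

open ComplexConjugate Filter Topology

section Plancherel

variable {E F : Type*} [NormedAddCommGroup E] [InnerProductSpace ℝ E] [FiniteDimensional ℝ E]
  [MeasurableSpace E] [BorelSpace E] [NormedAddCommGroup F] [InnerProductSpace ℂ F]

theorem continuous_fourier_of_integrable {f : E → F} (hf : Integrable f) : Continuous (𝓕 f) :=
  VectorFourier.fourierIntegral_continuous Real.continuous_fourierChar
    (by exact continuous_inner) hf

theorem integral_norm_sq_eq_norm_toLp_sq {f : E → F} (hf : MemLp f 2) :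
    ∫ x, ‖f x‖ ^ 2 = ‖hf.toLp f‖ ^ 2 := by
  have h := L2.inner_def (𝕜 := ℂ) (hf.toLp f) (hf.toLp f)
  simp only [inner_self_eq_norm_sq_to_K] at h
  norm_cast at h
  exact (integral_congr_ae (hf.coeFn_toLp.mono fun x hx => by simp only [hx])).trans h.symm

variable [CompleteSpace F]

theorem integral_fourier_smul_eq {u : E → ℂ} {f : E → F} (hu : Integrable u)
    (hf : Integrable f) : ∫ ξ, 𝓕 u ξ • f ξ = ∫ x, u x • 𝓕 f x := by
  have h := VectorFourier.integral_fourierIntegral_smul_eq_flip (μ := volume) (ν := volume)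
    (L := innerₗ E) Real.continuous_fourierChar (by exact continuous_inner) hu hf
  rwa [flip_innerₗ] at h

theorem coeFn_fourier_toLp {f : E → F} (hf : Integrable f) (hf₂ : MemLp f 2) :
    (𝓕 (hf₂.toLp f) : Lp (α := E) F 2) =ᵐ[volume] 𝓕 f := by
  refine ae_eq_of_integral_contDiff_smul_eq ((Lp.memLp _).locallyIntegrable (by norm_num))
    (continuous_fourier_of_integrable hf).locallyIntegrable fun u hu hu_supp => ?_
  let S : 𝓢(E, ℂ) := (hu_supp.comp_left (g := fun x : ℝ => (x : ℂ)) rfl).toSchwartzMap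
    (Complex.ofRealCLM.contDiff.comp hu)
  have distribution_eq := congrArg (fun D : 𝓢'(E, F) => D S)
    (Lp.fourier_toTemperedDistribution_eq (hf₂.toLp f))
  simp only [TemperedDistribution.fourier_apply, Lp.toTemperedDistribution_apply]
    at distribution_eq
  have hS : ∀ x, S x = (u x : ℂ) := fun _ => rfl
  calc ∫ x, u x • (𝓕 (hf₂.toLp f) : Lp (α := E) F 2 volume) x
      = ∫ x, S x • (𝓕 (hf₂.toLp f) : Lp (α := E) F 2 volume) x := by
        simp only [hS, Complex.coe_smul]
    _ = ∫ x, 𝓕 (⇑S) x • (hf₂.toLp f) x := by simp only [← distribution_eq, SchwartzMap.fourier_coe]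
    _ = ∫ x, 𝓕 (⇑S) x • f x :=
        integral_congr_ae (hf₂.coeFn_toLp.mono fun x hx => by simp only [hx])
    _ = ∫ x, u x • 𝓕 f x := by
        simp only [integral_fourier_smul_eq S.integrable hf, hS, Complex.coe_smul]

theorem memLp_two_fourier {f : E → F} (hf : Integrable f) (hf₂ : MemLp f 2) : MemLp (𝓕 f) 2 :=
  (memLp_congr_ae (coeFn_fourier_toLp hf hf₂)).1 (Lp.memLp _)

theorem integral_norm_fourier_sq {f : E → F} (hf : Integrable f) (hf₂ : MemLp f 2) :
    ∫ ξ, ‖𝓕 f ξ‖ ^ 2 = ∫ x, ‖f x‖ ^ 2 := by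
  have h : (memLp_two_fourier hf hf₂).toLp (𝓕 f) = (𝓕 (hf₂.toLp f) : Lp (α := E) F 2 volume) :=
    Lp.ext ((memLp_two_fourier hf hf₂).coeFn_toLp.trans (coeFn_fourier_toLp hf hf₂).symm)
  rw [integral_norm_sq_eq_norm_toLp_sq (memLp_two_fourier hf hf₂), h, Lp.norm_fourier_eq,
    integral_norm_sq_eq_norm_toLp_sq hf₂]

end Plancherel

section FourierOnLine

/-- The inverse of the transform `ft`. -/
noncomputable def ift (U : ℝ → ℂ) (x : ℝ) : ℂ :=
  (2 * Real.pi : ℂ)⁻¹ * ∫ ω : ℝ, Complex.exp (-(Complex.I * ω * x)) * U ω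

theorem ft_eq_fourier (t : ℝ → ℝ) (ω : ℝ) :
    ft t ω = 𝓕 (fun x => (t x : ℂ)) (-(2 * Real.pi)⁻¹ * ω) := by
  rw [ft, Real.fourier_real_eq_integral_exp_smul]
  refine integral_congr_ae (.of_forall fun x => ?_)
  simp only [smul_eq_mul]
  congr 2
  have := Complex.ofReal_ne_zero.2 Real.pi_ne_zero
  push_cast
  field_simp

theorem ift_eq_fourier (U : ℝ → ℂ) (x : ℝ) :
    ift U x = (2 * Real.pi : ℂ)⁻¹ * 𝓕 U ((2 * Real.pi)⁻¹ * x) := by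
  rw [ift, Real.fourier_real_eq_integral_exp_smul]
  congr 1
  refine integral_congr_ae (.of_forall fun ω => ?_)
  simp only [smul_eq_mul]
  congr 2
  have := Complex.ofReal_ne_zero.2 Real.pi_ne_zero
  push_cast
  field_simp

theorem ift_eq_fourierInv (U : ℝ → ℂ) (x : ℝ) :
    ift U x = 𝓕⁻ (fun ξ => U (-(2 * Real.pi) * ξ)) x := by
  have h := Measure.integral_comp_mul_left
    (fun ω : ℝ => Complex.exp (-(Complex.I * ω * x)) * U ω) (-(2 * Real.pi))
  rw [abs_inv, abs_neg, abs_of_pos Real.two_pi_pos, Complex.real_smul] at h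
  rw [ift, Real.fourierInv_eq']
  push_cast at h ⊢
  rw [← h]
  refine integral_congr_ae (.of_forall fun ξ => ?_)
  simp only [smul_eq_mul, RCLike.inner_apply, conj_trivial]
  congr 2
  push_cast
  ring

theorem continuous_ft {t : ℝ → ℝ} (ht : Integrable t) : Continuous (ft t) := by
  have := continuous_fourier_of_integrable (ht.ofReal (𝕜 := ℂ))
  simp only [funext (ft_eq_fourier t)]
  fun_prop

theorem continuous_ift {U : ℝ → ℂ} (hU : Integrable U) : Continuous (ift U) := by
  have := continuous_fourier_of_integrable hU
  simp only [funext (ift_eq_fourier U)]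
  fun_prop

theorem ft_eq_of_ift_eq {U : ℝ → ℂ} {t : ℝ → ℝ} (hU : Continuous U) (hUi : Integrable U)
    (ht : Integrable t) (hift : ∀ x, ift U x = t x) : ft t = U := by
  have hpi : -(2 * Real.pi) ≠ 0 := neg_ne_zero.2 Real.two_pi_pos.ne'
  have hscale : Integrable fun ξ => U (-(2 * Real.pi) * ξ) := hUi.comp_mul_left' hpi
  have ht_eq : (fun x => (t x : ℂ)) = 𝓕⁻ fun ξ => U (-(2 * Real.pi) * ξ) := by
    ext x
    rw [← hift, ift_eq_fourierInv]
  have hint : Integrable (𝓕 fun ξ => U (-(2 * Real.pi) * ξ)) := by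
    have h := (ht.ofReal (𝕜 := ℂ)).comp_neg
    simpa only [RCLike.ofReal_eq_complex_ofReal, funext_iff.1 ht_eq _,
      Real.fourierInv_eq_fourier_neg, neg_neg] using h
  ext ω
  rw [ft_eq_fourier, ht_eq, Continuous.fourier_fourierInv_eq (by fun_prop) hscale hint]
  field_simp

theorem ift_ft {t : ℝ → ℝ} (ht : Continuous t) (hti : Integrable t) (hft : Integrable (ft t))
    (x : ℝ) : ift (ft t) x = t x := by
  have h : (fun ξ => ft t (-(2 * Real.pi) * ξ)) = 𝓕 fun x => (t x : ℂ) := by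
    ext ξ
    rw [ft_eq_fourier]
    field_simp
  have hint := hft.comp_mul_left' (neg_ne_zero.2 Real.two_pi_pos.ne')
  rw [h] at hint
  rw [ift_eq_fourierInv, h, Continuous.fourierInv_fourier_eq (by fun_prop) hti.ofReal hint]

theorem ft_convolution {f g : ℝ → ℝ} (hf : Integrable f) (hg : Integrable g) (ω : ℝ) :
    ft (f ⋆ g) ω = ft f ω * ft g ω := by
  have hconv : (fun x => ((f ⋆ g) x : ℂ)) =
      (fun x => (f x : ℂ)) ⋆[ContinuousLinearMap.mul ℂ ℂ] fun x => (g x : ℂ) := by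
    ext x
    simp only [convolution_def, ContinuousLinearMap.lsmul_apply, ContinuousLinearMap.mul_apply',
      smul_eq_mul, ← integral_complex_ofReal, Complex.ofReal_mul]
  rw [ft_eq_fourier, ft_eq_fourier, ft_eq_fourier, hconv]
  exact Real.fourier_mul_convolution_eq hf.ofReal hg.ofReal _

theorem integrable_exp_mul_ofReal {t : ℝ → ℝ} (ht : Integrable t) (ω : ℝ) :
    Integrable fun x : ℝ => Complex.exp (Complex.I * ω * x) * (t x : ℂ) :=
  (ht.ofReal (𝕜 := ℂ)).bdd_mul (c := 1) (by fun_prop)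
    (.of_forall fun x => by simp [Complex.norm_exp])

theorem ft_add {t u : ℝ → ℝ} (ht : Integrable t) (hu : Integrable u) (ω : ℝ) :
    ft (fun x => t x + u x) ω = ft t ω + ft u ω := by
  simp only [ft, Complex.ofReal_add, mul_add,
    integral_add (integrable_exp_mul_ofReal ht ω) (integrable_exp_mul_ofReal hu ω)]

theorem ft_const_mul (c : ℝ) (t : ℝ → ℝ) (ω : ℝ) : ft (fun x => c * t x) ω = c * ft t ω := by
  simp only [ft, Complex.ofReal_mul, mul_left_comm _ (c : ℂ), integral_const_mul]

theorem norm_ft_le (t : ℝ → ℝ) (ω : ℝ) : ‖ft t ω‖ ≤ ∫ x, |t x| := by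
  refine (norm_integral_le_integral_norm _).trans_eq (integral_congr_ae (.of_forall fun x => ?_))
  simp [Complex.norm_exp]

theorem ft_neg (t : ℝ → ℝ) (ω : ℝ) : ft t (-ω) = conj (ft t ω) := by
  rw [ft, ft, ← integral_conj]
  refine integral_congr_ae (.of_forall fun x => ?_)
  simp [← Complex.exp_conj]

theorem ofReal_re_ift {U : ℝ → ℂ} (hU : ∀ ω, U (-ω) = conj (U ω)) (x : ℝ) :
    ((ift U x).re : ℂ) = ift U x := by
  rw [← Complex.conj_eq_iff_re, ift, map_mul, ← integral_conj, ← integral_neg_eq_self]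
  congr 1
  · simp [Complex.conj_ofNat]
  · refine integral_congr_ae (.of_forall fun ω => ?_)
    simp [← Complex.exp_conj, hU]

theorem memLp_two_ift {U : ℝ → ℂ} (hU : Integrable U) (hU₂ : MemLp U 2) : MemLp (ift U) 2 := by
  have h := (memLp_two_iff_integrable_sq_norm
    (continuous_fourier_of_integrable hU).aestronglyMeasurable).1 (memLp_two_fourier hU hU₂)
  rw [memLp_two_iff_integrable_sq_norm (continuous_ift hU).aestronglyMeasurable]
  simp only [ift_eq_fourier, norm_mul, mul_pow]
  exact (h.comp_mul_left' (inv_ne_zero Real.two_pi_pos.ne')).const_mul _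

theorem integral_norm_ift_sq {U : ℝ → ℂ} (hU : Integrable U) (hU₂ : MemLp U 2) :
    ∫ x, ‖ift U x‖ ^ 2 = (2 * Real.pi)⁻¹ * ∫ ω, ‖U ω‖ ^ 2 := by
  have hpi := Real.pi_pos
  have h := Measure.integral_comp_mul_left (fun ξ => ‖𝓕 U ξ‖ ^ 2) (2 * Real.pi)⁻¹
  rw [integral_norm_fourier_sq hU hU₂, inv_inv, abs_of_pos Real.two_pi_pos, smul_eq_mul] at h
  simp only [ift_eq_fourier, norm_mul, mul_pow, integral_const_mul, h]
  rw [norm_inv, norm_mul, Complex.norm_two, Complex.norm_real, Real.norm_of_nonneg hpi.le]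
  field_simp

theorem integrable_norm_ft_sq {t : ℝ → ℝ} (ht : Integrable t) (ht₂ : MemLp t 2) :
    Integrable fun ω => ‖ft t ω‖ ^ 2 := by
  have h := (memLp_two_iff_integrable_sq_norm
    (continuous_fourier_of_integrable ht.ofReal).aestronglyMeasurable).1
    (memLp_two_fourier (ht.ofReal (𝕜 := ℂ)) ht₂.ofReal)
  simp only [ft_eq_fourier]
  exact h.comp_mul_left' (neg_ne_zero.2 (inv_ne_zero Real.two_pi_pos.ne'))

theorem integral_norm_ft_sq {t : ℝ → ℝ} (ht : Integrable t) (ht₂ : MemLp t 2) :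
    ∫ ω, ‖ft t ω‖ ^ 2 = 2 * Real.pi * ∫ x, t x ^ 2 := by
  have h := Measure.integral_comp_mul_left (fun ξ => ‖𝓕 (fun x => (t x : ℂ)) ξ‖ ^ 2)
    (-(2 * Real.pi)⁻¹)
  rw [integral_norm_fourier_sq ht.ofReal ht₂.ofReal, inv_neg, inv_inv, abs_neg,
    abs_of_pos Real.two_pi_pos, smul_eq_mul] at h
  simp only [ft_eq_fourier, h, Complex.norm_real, Real.norm_eq_abs, sq_abs]

theorem hasCompactSupport_iteratedDeriv {W : ℝ → ℂ} (hW : HasCompactSupport W) (v : ℕ) :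
    HasCompactSupport (iteratedDeriv v W) := by
  rw [iteratedDeriv_eq_equiv_comp]
  exact (hW.iteratedFDeriv v).comp_left (map_zero _)

theorem norm_ift_iteratedDeriv {W : ℝ → ℂ} {v : ℕ} (hW : ContDiff ℝ v W)
    (hW_supp : HasCompactSupport W) (x : ℝ) :
    ‖ift (iteratedDeriv v W) x‖ = |x| ^ v * ‖ift W x‖ := by
  have hpi := Real.pi_pos
  have hint : ∀ j : ℕ, (j : ℕ∞) ≤ v → Integrable (iteratedDeriv j W) := fun j hj =>
    (hW.continuous_iteratedDeriv j (by exact_mod_cast hj)).integrable_of_hasCompactSupport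
      (hasCompactSupport_iteratedDeriv hW_supp j)
  rw [ift_eq_fourier, ift_eq_fourier, Real.fourier_iteratedDeriv (by exact_mod_cast hW) hint le_rfl]
  have hx : ‖(2 * Real.pi * Complex.I * ((2 * Real.pi)⁻¹ * x : ℝ) : ℂ)‖ = |x| := by
    simp only [norm_mul, Complex.norm_two, Complex.norm_real, Complex.norm_I, Real.norm_eq_abs,
      abs_mul, abs_inv, abs_of_pos hpi, abs_two]
    field_simp
  rw [norm_mul, norm_mul, norm_smul, norm_pow, hx]
  ring

theorem integrable_and_integral_norm_ift_sq_mul {W : ℝ → ℂ} {v : ℕ} (hW : ContDiff ℝ v W)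
    (hW_supp : HasCompactSupport W) :
    Integrable (fun x => ‖ift W x‖ ^ 2 * (1 + x ^ (2 * v))) ∧
      ∫ x, ‖ift W x‖ ^ 2 * (1 + x ^ (2 * v)) =
        (2 * Real.pi)⁻¹ * ∫ ω, (‖W ω‖ ^ 2 + ‖iteratedDeriv v W ω‖ ^ 2) := by
  have hV := hW.continuous_iteratedDeriv v le_rfl
  have hV_supp := hasCompactSupport_iteratedDeriv hW_supp v
  have hWi := hW.continuous.integrable_of_hasCompactSupport hW_supp (μ := volume)
  have hVi := hV.integrable_of_hasCompactSupport hV_supp (μ := volume)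
  have hW₂ := hW.continuous.memLp_of_hasCompactSupport hW_supp (μ := volume) (p := 2)
  have hV₂ := hV.memLp_of_hasCompactSupport hV_supp (μ := volume) (p := 2)
  have hsplit : ∀ x, ‖ift W x‖ ^ 2 * (1 + x ^ (2 * v)) =
      ‖ift W x‖ ^ 2 + ‖ift (iteratedDeriv v W) x‖ ^ 2 := fun x => by
    rw [norm_ift_iteratedDeriv hW hW_supp, mul_pow, ← pow_mul, mul_comm v, pow_mul |x|, sq_abs,
      ← pow_mul]
    ring
  have hsq {f : ℝ → ℂ} (hf : MemLp f 2) : Integrable fun x => ‖f x‖ ^ 2 :=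
    (memLp_two_iff_integrable_sq_norm hf.1).1 hf
  have hiW := hsq (memLp_two_ift hWi hW₂)
  have hiV := hsq (memLp_two_ift hVi hV₂)
  simp only [hsplit]
  exact ⟨hiW.add hiV, by rw [integral_add hiW hiV, integral_norm_ift_sq hWi hW₂,
    integral_norm_ift_sq hVi hV₂, integral_add (hsq hW₂) (hsq hV₂), mul_add]⟩

theorem integrable_of_ft_ne_zero {φ : ℝ → ℝ} {ω : ℝ} (hφ : ft φ ω ≠ 0) : Integrable φ := by
  have hint : Integrable fun x : ℝ => Complex.exp (Complex.I * ω * x) * (φ x : ℂ) :=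
    .of_integral_ne_zero hφ
  have hφ_re := (hint.bdd_mul (c := 1) (f := fun x : ℝ => Complex.exp (-(Complex.I * ω * x)))
    (by fun_prop) (.of_forall fun x => by simp [Complex.norm_exp])).re
  simpa [← mul_assoc, ← Complex.exp_add] using hφ_re

end FourierOnLine

section TwoPoint

variable {α ι : Type*} [MeasurableSpace α] [Fintype ι] {μ : Measure α} {p q : α → ℝ}

/-- `p` is a probability density with respect to `μ`. -/
structure IsDensity (p : α → ℝ) (μ : Measure α := by volume_tac) : Prop where
  nonneg : ∀ y, 0 ≤ p y
  integrable : Integrable p μ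
  integral_eq_one : ∫ y, p y ∂μ = 1

/-- The Hellinger affinity `∫ √(p q)` of two densities. -/
noncomputable def affinity (p q : α → ℝ) (μ : Measure α := by volume_tac) : ℝ :=
  ∫ y, √(p y) * √(q y) ∂μ

/-- The mean squared error `E ‖T - z‖²` of the estimator `T` of `z` under the density `p`. -/
noncomputable def sqRisk {E : Type*} [NormedAddCommGroup E] (T : α → E) (p : α → ℝ) (z : E)
    (μ : Measure α := by volume_tac) : ENNReal :=
  ∫⁻ y, ENNReal.ofReal (‖T y - z‖ ^ 2 * p y) ∂μ

theorem IsDensity.integrable_sqrt_mul_sqrt (hp : IsDensity p μ) (hq : IsDensity q μ) :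
    Integrable (fun y => √(p y) * √(q y)) μ := by
  refine (hp.integrable.add hq.integrable).mono'
    (hp.integrable.1.aemeasurable.sqrt.mul hq.integrable.1.aemeasurable.sqrt).aestronglyMeasurable
    (.of_forall fun y => ?_)
  rw [Real.norm_of_nonneg (by positivity), Pi.add_apply]
  nlinarith [Real.sq_sqrt (hp.nonneg y), Real.sq_sqrt (hq.nonneg y), sq_nonneg (√(p y) - √(q y)),
    hp.nonneg y, hq.nonneg y]

theorem sq_sqrt_sub_sqrt_le {a b c : ℝ} (ha : 0 < a) (hb : 0 ≤ b) (h : (a - b) ^ 2 ≤ a * c) :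
    (√a - √b) ^ 2 ≤ c := by
  have hfactor : (√a - √b) ^ 2 * (√a + √b) ^ 2 = (a - b) ^ 2 := by
    rw [← mul_pow, mul_comm, ← sq_sub_sq, Real.sq_sqrt ha.le, Real.sq_sqrt hb]
  have ha_le : a ≤ (√a + √b) ^ 2 := by
    nlinarith [Real.sq_sqrt ha.le, Real.sqrt_nonneg a, Real.sqrt_nonneg b]
  refine le_of_mul_le_mul_left ?_ ha
  calc a * (√a - √b) ^ 2 ≤ (√a - √b) ^ 2 * (√a + √b) ^ 2 := by
        rw [mul_comm]
        gcongr
    _ ≤ a * c := hfactor.trans_le h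

theorem one_sub_half_integral_le_affinity {e : α → ℝ} (hp : IsDensity p μ) (hq : IsDensity q μ)
    (hp_pos : ∀ y, 0 < p y) (he : Integrable e μ) (hpq : ∀ y, (p y - q y) ^ 2 ≤ p y * e y) :
    1 - (∫ y, e y ∂μ) / 2 ≤ affinity p q μ := by
  have hmean : Integrable (fun y => (p y + q y) / 2) μ :=
    (hp.integrable.add hq.integrable).div_const 2
  calc 1 - (∫ y, e y ∂μ) / 2 = ∫ y, ((p y + q y) / 2 - e y / 2) ∂μ := by
        rw [integral_sub hmean (he.div_const 2), integral_div, integral_div,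
          integral_add hp.integrable hq.integrable, hp.integral_eq_one, hq.integral_eq_one]
        norm_num
    _ ≤ affinity p q μ := by
        refine integral_mono (hmean.sub (he.div_const 2)) (hp.integrable_sqrt_mul_sqrt hq)
          fun y => ?_
        have h := sq_sqrt_sub_sqrt_le (hp_pos y) (hq.nonneg y) (hpq y)
        nlinarith [Real.sq_sqrt (hp.nonneg y), Real.sq_sqrt (hq.nonneg y)]

theorem IsDensity.pi [SigmaFinite μ] (hp : IsDensity p μ) :
    IsDensity (fun y : ι → α => ∏ i, p (y i)) (Measure.pi fun _ => μ) where
  nonneg y := prod_nonneg fun i _ => hp.nonneg (y i)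
  integrable := Integrable.fintype_prod fun _ => hp.integrable
  integral_eq_one := by rw [integral_fintype_prod_eq_pow p, hp.integral_eq_one, one_pow]

theorem affinity_pi [SigmaFinite μ] (hp : ∀ y, 0 ≤ p y) (hq : ∀ y, 0 ≤ q y) :
    affinity (fun y : ι → α => ∏ i, p (y i)) (fun y => ∏ i, q (y i)) (Measure.pi fun _ => μ) =
      affinity p q μ ^ Fintype.card ι := by
  rw [affinity, affinity, ← integral_fintype_prod_eq_pow]
  simp only [Real.sqrt_prod _ fun _ _ => hp _, Real.sqrt_prod _ fun _ _ => hq _, prod_mul_distrib]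

variable {E : Type*} [NormedAddCommGroup E] {T : α → E}

theorem lintegral_norm_sub_mul_sqrt_le (hT : AEStronglyMeasurable T μ) (hp : IsDensity p μ)
    (hq : IsDensity q μ) (z : E) :
    ∫⁻ y, ENNReal.ofReal (‖T y - z‖ * (√(p y) * √(q y))) ∂μ ≤ sqRisk T p z μ ^ (1 / 2 : ℝ) := by
  have hsq : ∀ {x : ℝ}, 0 ≤ x → ENNReal.ofReal x ^ (2 : ℝ) = ENNReal.ofReal (x ^ 2) := fun hx => by
    rw [ENNReal.ofReal_rpow_of_nonneg hx two_pos.le, Real.rpow_two]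
  have hTz : AEMeasurable (fun y => ‖T y - z‖) μ :=
    (hT.sub aestronglyMeasurable_const).norm.aemeasurable
  have holder := ENNReal.lintegral_mul_le_Lp_mul_Lq μ Real.HolderConjugate.two_two
    (hTz.mul hp.integrable.1.aemeasurable.sqrt).ennreal_ofReal
    hq.integrable.1.aemeasurable.sqrt.ennreal_ofReal
  have hq_one : ∫⁻ y, ENNReal.ofReal √(q y) ^ (2 : ℝ) ∂μ = 1 := by
    simp only [hsq (Real.sqrt_nonneg _), Real.sq_sqrt (hq.nonneg _)]
    rw [← ofReal_integral_eq_lintegral_ofReal hq.integrable (.of_forall hq.nonneg),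
      hq.integral_eq_one, ENNReal.ofReal_one]
  have hrisk : ∫⁻ y, ENNReal.ofReal (‖T y - z‖ * √(p y)) ^ (2 : ℝ) ∂μ = sqRisk T p z μ :=
    lintegral_congr fun y => by rw [hsq (by positivity), mul_pow, Real.sq_sqrt (hp.nonneg y)]
  simp only [Pi.mul_apply, hq_one, hrisk, ENNReal.one_rpow, mul_one] at holder
  refine le_trans (lintegral_mono fun y => ?_) holder
  rw [← ENNReal.ofReal_mul (by positivity), mul_assoc]

theorem ofReal_norm_sub_mul_affinity_le (hT : AEStronglyMeasurable T μ) (hp : IsDensity p μ)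
    (hq : IsDensity q μ) (z w : E) :
    ENNReal.ofReal (‖w - z‖ * affinity p q μ) ≤
      sqRisk T p z μ ^ (1 / 2 : ℝ) + sqRisk T q w μ ^ (1 / 2 : ℝ) := by
  have hpq := hp.integrable_sqrt_mul_sqrt hq
  have hTz : AEMeasurable (fun y => ‖T y - z‖) μ :=
    (hT.sub aestronglyMeasurable_const).norm.aemeasurable
  calc ENNReal.ofReal (‖w - z‖ * affinity p q μ)
      = ∫⁻ y, ENNReal.ofReal (‖w - z‖ * (√(p y) * √(q y))) ∂μ := by
        rw [affinity, ← integral_const_mul, ofReal_integral_eq_lintegral_ofReal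
          (hpq.const_mul _) (.of_forall fun y => by positivity)]
    _ ≤ ∫⁻ y, (ENNReal.ofReal (‖T y - z‖ * (√(p y) * √(q y))) +
          ENNReal.ofReal (‖T y - w‖ * (√(q y) * √(p y)))) ∂μ := by
        refine lintegral_mono fun y => ?_
        rw [← ENNReal.ofReal_add (by positivity) (by positivity), mul_comm √(q y), ← add_mul]
        gcongr
        rw [← sub_sub_sub_cancel_left z w (T y)]
        exact norm_sub_le _ _
    _ ≤ _ := (lintegral_add_left' (hTz.mul hpq.1.aemeasurable).ennreal_ofReal _).trans_le
        (add_le_add (lintegral_norm_sub_mul_sqrt_le hT hp hq z)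
          (lintegral_norm_sub_mul_sqrt_le hT hq hp w))

theorem sq_le_sqRisk_or_sq_le_sqRisk (hT : AEStronglyMeasurable T μ) (hp : IsDensity p μ)
    (hq : IsDensity q μ) {z w : E} {D : ℝ} (hD : 0 ≤ D) (haff : 2 * D ≤ ‖w - z‖ * affinity p q μ) :
    ENNReal.ofReal (D ^ 2) ≤ sqRisk T p z μ ∨ ENNReal.ofReal (D ^ 2) ≤ sqRisk T q w μ := by
  by_contra! hlt
  have hroot {R : ENNReal} (hR : R < ENNReal.ofReal (D ^ 2)) :
      R ^ (1 / 2 : ℝ) < ENNReal.ofReal D := by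
    have h := ENNReal.rpow_lt_rpow hR (one_half_pos (α := ℝ))
    rwa [ENNReal.ofReal_rpow_of_nonneg (sq_nonneg D) (by norm_num), ← Real.sqrt_eq_rpow,
      Real.sqrt_sq hD] at h
  have hsum := (ofReal_norm_sub_mul_affinity_le hT hp hq z w).trans_lt
    (ENNReal.add_lt_add (hroot hlt.1) (hroot hlt.2))
  rw [← ENNReal.ofReal_add hD hD, ← two_mul] at hsum
  exact (ENNReal.ofReal_le_ofReal haff).not_gt hsum

theorem half_le_pow_of_one_sub_le {x : ℝ} {n : ℕ} (hx : 1 - (n : ℝ)⁻¹ / 2 ≤ x) : 1 / 2 ≤ x ^ n := by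
  rcases n.eq_zero_or_pos with rfl | hn
  · norm_num
  have hn1 : (n : ℝ)⁻¹ ≤ 1 := inv_le_one_of_one_le₀ (by exact_mod_cast hn)
  calc (1 / 2 : ℝ) = 1 + n * (-((n : ℝ)⁻¹ / 2)) := by field_simp; norm_num
    _ ≤ (1 + -((n : ℝ)⁻¹ / 2)) ^ n := one_add_mul_le_pow (by linarith) n
    _ ≤ x ^ n := pow_le_pow_left₀ (by linarith) (by linarith) n

/-- Le Cam's two-point method; `e` dominates the integrand `(p - q)² / p` of the `χ²`-distance. -/
theorem sq_le_sqRisk_pi_or_sq_le_sqRisk_pi [SigmaFinite μ] {T : (ι → α) → E}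
    (hT : AEStronglyMeasurable T (Measure.pi fun _ => μ)) (hp : IsDensity p μ)
    (hq : IsDensity q μ) (hp_pos : ∀ y, 0 < p y) {e : α → ℝ} (he : Integrable e μ)
    (hpq : ∀ y, (p y - q y) ^ 2 ≤ p y * e y) (he_int : ∫ y, e y ∂μ ≤ (Fintype.card ι : ℝ)⁻¹)
    {z w : E} {D : ℝ} (hD : 0 ≤ D) (hzw : 4 * D ≤ ‖w - z‖) :
    ENNReal.ofReal (D ^ 2) ≤ sqRisk T (fun y => ∏ i, p (y i)) z (Measure.pi fun _ => μ) ∨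
      ENNReal.ofReal (D ^ 2) ≤ sqRisk T (fun y => ∏ i, q (y i)) w (Measure.pi fun _ => μ) := by
  refine sq_le_sqRisk_or_sq_le_sqRisk hT hp.pi hq.pi hD ?_
  have haff : 1 / 2 ≤ affinity p q μ ^ Fintype.card ι := half_le_pow_of_one_sub_le
    ((one_sub_half_integral_le_affinity hp hq hp_pos he hpq).trans' (by linarith))
  rw [affinity_pi hp.nonneg hq.nonneg]
  nlinarith [norm_nonneg (w - z)]

end TwoPoint

section GaussianKernel

open scoped NNReal

open ProbabilityTheory (gaussianPDFReal)

variable {σ : ℝ≥0}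

theorem ft_gaussianPDFReal (hσ : σ ≠ 0) (ω : ℝ) :
    ft (gaussianPDFReal 0 σ) ω = Real.exp (-(σ * ω ^ 2 / 2)) := by
  have h := ProbabilityTheory.charFun_gaussianReal (μ := 0) (v := σ) ω
  rw [charFun_apply_real, ProbabilityTheory.integral_gaussianReal_eq_integral_smul hσ] at h
  calc ft (gaussianPDFReal 0 σ) ω
      = ∫ x, gaussianPDFReal 0 σ x • Complex.exp (ω * x * Complex.I) := by
        refine integral_congr_ae (.of_forall fun x => ?_)
        beta_reduce
        rw [Complex.real_smul, mul_comm, show Complex.I * ω * x = ω * x * Complex.I by ring]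
    _ = Real.exp (-(σ * ω ^ 2 / 2)) := by
        rw [h]
        push_cast
        ring_nf

theorem isDensity_gaussianPDFReal (hσ : σ ≠ 0) : IsDensity (gaussianPDFReal 0 σ) where
  nonneg := ProbabilityTheory.gaussianPDFReal_nonneg 0 σ
  integrable := ProbabilityTheory.integrable_gaussianPDFReal 0 σ
  integral_eq_one := ProbabilityTheory.integral_gaussianPDFReal_eq_one 0 hσ

theorem continuous_gaussianPDFReal : Continuous (gaussianPDFReal 0 σ) := by
  rw [ProbabilityTheory.gaussianPDFReal_def]
  fun_prop

theorem bddAbove_norm_gaussianPDFReal :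
    BddAbove (Set.range fun x => ‖gaussianPDFReal 0 σ x‖) := by
  refine ⟨(√(2 * Real.pi * σ))⁻¹, Set.forall_mem_range.2 fun x => ?_⟩
  rw [Real.norm_of_nonneg (ProbabilityTheory.gaussianPDFReal_nonneg 0 σ x),
    ProbabilityTheory.gaussianPDFReal]
  refine mul_le_of_le_one_right (by positivity) (Real.exp_le_one_iff.2 ?_)
  rw [neg_div]
  exact neg_nonpos.2 (by positivity)

theorem integrable_exp_neg_mul_sq_div_two {c : ℝ} (hc : 0 < c) :
    Integrable fun ω : ℝ => Real.exp (-(c * ω ^ 2 / 2)) := by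
  refine (integrable_exp_neg_mul_sq (half_pos hc)).congr (.of_forall fun ω => ?_)
  ring_nf

theorem one_add_sq_rpow_le {s m : ℝ} (hs : 0 ≤ s) (hm : 1 ≤ m) (ω : ℝ) :
    (ω ^ 2 + 1) ^ s ≤ m ^ (2 * s) * Real.exp (s / m ^ 2 * ω ^ 2) := by
  have hm₀ : 0 < m := one_pos.trans_le hm
  have hbase : ω ^ 2 + 1 ≤ m ^ 2 * Real.exp (ω ^ 2 / m ^ 2) :=
    calc ω ^ 2 + 1 ≤ m ^ 2 * (ω ^ 2 / m ^ 2 + 1) := by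
          rw [mul_add, mul_div_cancel₀ _ (by positivity)]
          nlinarith
      _ ≤ _ := by gcongr; exact Real.add_one_le_exp _
  calc (ω ^ 2 + 1) ^ s ≤ (m ^ 2 * Real.exp (ω ^ 2 / m ^ 2)) ^ s := by gcongr
    _ = m ^ (2 * s) * Real.exp (s / m ^ 2 * ω ^ 2) := by
      rw [Real.mul_rpow (by positivity) (by positivity), ← Real.rpow_natCast_mul hm₀.le,
        ← Real.exp_mul]
      push_cast
      ring_nf

end GaussianKernel

section Densities

variable {f g h r : ℝ → ℝ} {c : ℝ}

theorem IsDensity.convex_combination (hf : IsDensity f) (hg : IsDensity g) (hc₀ : 0 ≤ c)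
    (hc₁ : c ≤ 1) : IsDensity fun x => (1 - c) * f x + c * g x where
  nonneg x :=
    add_nonneg (mul_nonneg (sub_nonneg.2 hc₁) (hf.nonneg x)) (mul_nonneg hc₀ (hg.nonneg x))
  integrable := (hf.integrable.const_mul _).add (hg.integrable.const_mul _)
  integral_eq_one := by
    rw [integral_add (hf.integrable.const_mul _) (hg.integrable.const_mul _), integral_const_mul,
      integral_const_mul, hf.integral_eq_one, hg.integral_eq_one]
    ring

theorem IsDensity.convolution (hf : IsDensity f) (hg : IsDensity g) : IsDensity (f ⋆ g) where
  nonneg x := integral_nonneg fun t => mul_nonneg (hf.nonneg t) (hg.nonneg (x - t))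
  integrable := hf.integrable.integrable_convolution _ hg.integrable
  integral_eq_one := by
    rw [integral_convolution _ hf.integrable hg.integrable, hf.integral_eq_one, hg.integral_eq_one,
      ContinuousLinearMap.lsmul_apply, one_smul]

theorem convolutionExists_of_bddAbove (hf : Integrable f) (hg : Continuous g)
    (hgb : BddAbove (Set.range fun x => ‖g x‖)) :
    ConvolutionExists f g (ContinuousLinearMap.lsmul ℝ ℝ) := fun x =>
  BddAbove.convolutionExistsAt _ (s := Set.univ) (by rwa [Set.preimage_univ, Set.image_univ]) .univ
    (Set.subset_univ _) hf.integrableOn hg.aestronglyMeasurable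

theorem bddAbove_norm_convolution (hf : Integrable f) (hgb : BddAbove (Set.range fun x => ‖g x‖)) :
    BddAbove (Set.range fun x => ‖(f ⋆ g) x‖) := by
  obtain ⟨M, hM⟩ := hgb
  refine ⟨∫ t, ‖f t‖ * M, Set.forall_mem_range.2 fun x => ?_⟩
  refine norm_integral_le_of_norm_le (hf.norm.mul_const M) (.of_forall fun t => ?_)
  rw [ContinuousLinearMap.lsmul_apply, norm_smul]
  gcongr
  exact hM ⟨x - t, rfl⟩

/-- The density `(1 - μ) g + μ (g ⋆ f)` of an observation whose signal is nonzero with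
probability `μ`, and then has density `f`. -/
noncomputable def mixDensity (μ : ℝ) (g f : ℝ → ℝ) (y : ℝ) : ℝ :=
  (1 - μ) * g y + μ * (g ⋆ f) y

variable {μ : ℝ}

theorem isDensity_mixDensity (hg : IsDensity g) (hf : IsDensity f) (hμ₀ : 0 ≤ μ) (hμ₁ : μ ≤ 1) :
    IsDensity (mixDensity μ g f) :=
  hg.convex_combination (hg.convolution hf) hμ₀ hμ₁

theorem half_mul_le_mixDensity (hg : ∀ y, 0 ≤ g y) (hf : ∀ x, 0 ≤ f x) (hμ₀ : 0 ≤ μ)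
    (hμ : μ ≤ 1 / 2) (y : ℝ) : g y / 2 ≤ mixDensity μ g f y := by
  have hconv : 0 ≤ (g ⋆ f) y := integral_nonneg fun t => mul_nonneg (hg t) (hf (y - t))
  rw [mixDensity]
  nlinarith [mul_nonneg hμ₀ hconv, hg y]

theorem mixDensity_add_const_mul {y : ℝ}
    (hf : ConvolutionExistsAt g f y (ContinuousLinearMap.lsmul ℝ ℝ))
    (hh : ConvolutionExistsAt g h y (ContinuousLinearMap.lsmul ℝ ℝ)) :
    mixDensity μ g (fun x => f x + c * h x) y = mixDensity μ g f y + μ * c * (g ⋆ h) y := by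
  have hch : ConvolutionExistsAt g (c • h) y (ContinuousLinearMap.lsmul ℝ ℝ) := by
    refine (hh.smul c).congr (.of_forall fun t => ?_)
    simp only [Pi.smul_apply, ContinuousLinearMap.lsmul_apply, smul_eq_mul]
    ring
  have hsplit : (g ⋆ fun x => f x + c * h x) y = (g ⋆ f) y + c * (g ⋆ h) y := by
    rw [← smul_eq_mul c, ← Pi.smul_apply, ← convolution_smul]
    exact hf.distrib_add hch
  rw [mixDensity, mixDensity, hsplit]
  ring

end Densities

section Candidates

open scoped NNReal

open ProbabilityTheory (gaussianPDFReal integrable_gaussianPDFReal gaussianPDFReal_nonneg)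

/-- `f` is a probability density in the Sobolev ball `Ω_s(B)` at which the functional attached to
`φ` is defined. -/
structure IsAdmissible (φ : ℝ → ℝ) (s B : ℝ) (f : ℝ → ℝ) : Prop where
  isDensity : IsDensity f
  sobolev : ∫ ω, ‖ft f ω‖ ^ 2 * (ω ^ 2 + 1) ^ s ≤ B ^ 2
  integrable_mul : Integrable fun ω => ‖ft f ω‖ * ‖ft φ ω‖

/-- The target functional `Φ = ∫ φ f`, written on the Fourier side. -/
noncomputable def functional (φ f : ℝ → ℝ) : ℂ :=
  (1 / (2 * Real.pi) : ℂ) * ∫ ω, ft f ω * ft φ (-ω)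

/-- A centred normal density of variance `σ₀` perturbed by `δ` times a normal smoothing, of
variance `σ`, of the nonnegative function `r`. -/
noncomputable def candidate (δ : ℝ) (σ₀ σ : ℝ≥0) (r : ℝ → ℝ) (x : ℝ) : ℝ :=
  (1 - δ * ∫ t, r t) * gaussianPDFReal 0 σ₀ x + δ * (r ⋆ gaussianPDFReal 0 σ) x

variable {δ : ℝ} {σ₀ σ : ℝ≥0} {r k φ : ℝ → ℝ}

theorem integrable_convolution_gaussianPDFReal (hr : Integrable r) :
    Integrable (r ⋆ gaussianPDFReal 0 σ) :=
  hr.integrable_convolution _ (integrable_gaussianPDFReal 0 σ)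

theorem continuous_convolution_gaussianPDFReal (hr : Integrable r) :
    Continuous (r ⋆ gaussianPDFReal 0 σ) :=
  bddAbove_norm_gaussianPDFReal.continuous_convolution_right_of_integrable _ hr
    continuous_gaussianPDFReal

theorem continuous_candidate (hr : Integrable r) : Continuous (candidate δ σ₀ σ r) :=
  (continuous_gaussianPDFReal.const_mul _).add
    ((continuous_convolution_gaussianPDFReal hr).const_mul δ)

theorem bddAbove_norm_candidate (hr : Integrable r) :
    BddAbove (Set.range fun x => ‖candidate δ σ₀ σ r x‖) := by
  obtain ⟨M₀, hM₀⟩ := bddAbove_norm_gaussianPDFReal (σ := σ₀)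
  obtain ⟨M, hM⟩ := bddAbove_norm_convolution hr (bddAbove_norm_gaussianPDFReal (σ := σ))
  refine ⟨‖1 - δ * ∫ t, r t‖ * M₀ + ‖δ‖ * M, Set.forall_mem_range.2 fun x => ?_⟩
  refine (norm_add_le _ _).trans ?_
  rw [norm_mul, norm_mul]
  gcongr
  exacts [hM₀ ⟨x, rfl⟩, hM ⟨x, rfl⟩]

theorem isDensity_candidate (hσ₀ : σ₀ ≠ 0) (hσ : σ ≠ 0) (hr : ∀ x, 0 ≤ r x) (hri : Integrable r)
    (hδ : 0 ≤ δ) (hδr : δ * ∫ t, r t ≤ 1) : IsDensity (candidate δ σ₀ σ r) where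
  nonneg x := add_nonneg (mul_nonneg (sub_nonneg.2 hδr) (gaussianPDFReal_nonneg 0 σ₀ x))
    (mul_nonneg hδ (integral_nonneg fun t => mul_nonneg (hr t) (gaussianPDFReal_nonneg 0 σ _)))
  integrable := ((integrable_gaussianPDFReal 0 σ₀).const_mul _).add
    ((integrable_convolution_gaussianPDFReal hri).const_mul δ)
  integral_eq_one := by
    simp only [candidate]
    rw [integral_add ((integrable_gaussianPDFReal 0 σ₀).const_mul _)
        ((integrable_convolution_gaussianPDFReal hri).const_mul δ), integral_const_mul,
      integral_const_mul, integral_convolution _ hri (integrable_gaussianPDFReal 0 σ),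
      (isDensity_gaussianPDFReal hσ₀).integral_eq_one,
      (isDensity_gaussianPDFReal hσ).integral_eq_one, ContinuousLinearMap.lsmul_apply, smul_eq_mul]
    ring

theorem ft_candidate (hσ₀ : σ₀ ≠ 0) (hσ : σ ≠ 0) (hr : Integrable r) (ω : ℝ) :
    ft (candidate δ σ₀ σ r) ω = ((1 - δ * ∫ t, r t : ℝ) : ℂ) * Real.exp (-(σ₀ * ω ^ 2 / 2)) +
      δ * (ft r ω * Real.exp (-(σ * ω ^ 2 / 2))) := by
  rw [← ft_gaussianPDFReal hσ₀, ← ft_gaussianPDFReal hσ,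
    ← ft_convolution hr (integrable_gaussianPDFReal 0 σ), ← ft_const_mul, ← ft_const_mul]
  exact ft_add ((integrable_gaussianPDFReal 0 σ₀).const_mul _)
    ((integrable_convolution_gaussianPDFReal hr).const_mul δ) ω

theorem norm_ft_candidate_le (hσ₀ : σ₀ ≠ 0) (hσ : σ ≠ 0) (hr : ∀ x, 0 ≤ r x) (hri : Integrable r)
    (hδ : 0 ≤ δ) (hδr : δ * ∫ t, r t ≤ 1) (ω : ℝ) :
    ‖ft (candidate δ σ₀ σ r) ω‖ ≤
      Real.exp (-(σ₀ * ω ^ 2 / 2)) + δ * (‖ft r ω‖ * Real.exp (-(σ * ω ^ 2 / 2))) := by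
  have hmass : 0 ≤ δ * ∫ t, r t := mul_nonneg hδ (integral_nonneg hr)
  rw [ft_candidate hσ₀ hσ hri]
  refine (norm_add_le _ _).trans ?_
  simp only [norm_mul, Complex.norm_real, Real.norm_of_nonneg (Real.exp_pos _).le,
    Real.norm_of_nonneg hδ, Real.norm_of_nonneg (sub_nonneg.2 hδr)]
  gcongr
  exact mul_le_of_le_one_left (Real.exp_pos _).le (by linarith)

theorem norm_ft_candidate_sq_mul_le {s m : ℝ} (hs : 0 ≤ s) (hm : 1 ≤ m) (hσ₀ : σ₀ ≠ 0)
    (hσ : σ ≠ 0) (hσs : s / m ^ 2 ≤ σ) (hr : ∀ x, 0 ≤ r x) (hri : Integrable r) (hδ : 0 ≤ δ)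
    (hδr : δ * ∫ t, r t ≤ 1) (ω : ℝ) :
    ‖ft (candidate δ σ₀ σ r) ω‖ ^ 2 * (ω ^ 2 + 1) ^ s ≤
      2 * Real.exp (-(σ₀ - s) * ω ^ 2) + 2 * (δ ^ 2 * m ^ (2 * s)) * ‖ft r ω‖ ^ 2 := by
  have hbase : Real.exp (-(σ₀ * ω ^ 2 / 2)) ^ 2 * (ω ^ 2 + 1) ^ s ≤
      Real.exp (-(σ₀ - s) * ω ^ 2) :=
    calc _ ≤ Real.exp (-(σ₀ * ω ^ 2 / 2)) ^ 2 * (1 ^ (2 * s) * Real.exp (s / 1 ^ 2 * ω ^ 2)) := by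
          gcongr
          exact one_add_sq_rpow_le hs le_rfl ω
      _ = _ := by
          rw [Real.one_rpow, one_mul, ← Real.exp_nat_mul, ← Real.exp_add]
          push_cast
          ring_nf
  have hbump : Real.exp (-(σ * ω ^ 2 / 2)) ^ 2 * (ω ^ 2 + 1) ^ s ≤ m ^ (2 * s) :=
    calc _ ≤ Real.exp (-(s / m ^ 2 * ω ^ 2 / 2)) ^ 2 *
            (m ^ (2 * s) * Real.exp (s / m ^ 2 * ω ^ 2)) := by
          gcongr
          exact one_add_sq_rpow_le hs hm ω
      _ = m ^ (2 * s) := by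
          rw [mul_left_comm, ← Real.exp_nat_mul, ← Real.exp_add]
          push_cast
          ring_nf
          rw [Real.exp_zero, mul_one]
  have hsq : ‖ft (candidate δ σ₀ σ r) ω‖ ^ 2 ≤ 2 * (Real.exp (-(σ₀ * ω ^ 2 / 2)) ^ 2 +
      (δ * (‖ft r ω‖ * Real.exp (-(σ * ω ^ 2 / 2)))) ^ 2) :=
    (pow_le_pow_left₀ (norm_nonneg _) (norm_ft_candidate_le hσ₀ hσ hr hri hδ hδr ω) 2).trans
      add_sq_le
  calc _ ≤ 2 * (Real.exp (-(σ₀ * ω ^ 2 / 2)) ^ 2 +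
        (δ * (‖ft r ω‖ * Real.exp (-(σ * ω ^ 2 / 2)))) ^ 2) * (ω ^ 2 + 1) ^ s := by gcongr
    _ = 2 * (Real.exp (-(σ₀ * ω ^ 2 / 2)) ^ 2 * (ω ^ 2 + 1) ^ s) + 2 * (δ ^ 2 * ‖ft r ω‖ ^ 2) *
        (Real.exp (-(σ * ω ^ 2 / 2)) ^ 2 * (ω ^ 2 + 1) ^ s) := by ring
    _ ≤ 2 * Real.exp (-(σ₀ - s) * ω ^ 2) + 2 * (δ ^ 2 * ‖ft r ω‖ ^ 2) * m ^ (2 * s) := by gcongr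
    _ = _ := by ring

theorem integral_norm_ft_candidate_sq_mul_le {s m : ℝ} (hs : 0 ≤ s) (hm : 1 ≤ m) (hσ₀ : s < σ₀)
    (hσ : σ ≠ 0) (hσs : s / m ^ 2 ≤ σ) (hr : ∀ x, 0 ≤ r x) (hri : Integrable r) (hr₂ : MemLp r 2)
    (hδ : 0 ≤ δ) (hδr : δ * ∫ t, r t ≤ 1) :
    ∫ ω, ‖ft (candidate δ σ₀ σ r) ω‖ ^ 2 * (ω ^ 2 + 1) ^ s ≤
      2 * √(Real.pi / (σ₀ - s)) + 4 * Real.pi * (δ ^ 2 * m ^ (2 * s)) * ∫ x, r x ^ 2 := by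
  have hσ₀' : σ₀ ≠ 0 := by
    rintro rfl
    exact hs.not_gt hσ₀
  have hgauss := (integrable_exp_neg_mul_sq (sub_pos.2 hσ₀)).const_mul 2
  have hbump := (integrable_norm_ft_sq hri hr₂).const_mul (2 * (δ ^ 2 * m ^ (2 * s)))
  calc _ ≤ ∫ ω, (2 * Real.exp (-(σ₀ - s) * ω ^ 2) +
        2 * (δ ^ 2 * m ^ (2 * s)) * ‖ft r ω‖ ^ 2) :=
        integral_mono_of_nonneg (.of_forall fun ω => by positivity) (hgauss.add hbump)
          (.of_forall (norm_ft_candidate_sq_mul_le hs hm hσ₀' hσ hσs hr hri hδ hδr))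
    _ = _ := by
        rw [integral_add hgauss hbump, integral_const_mul, integral_const_mul, integral_gaussian,
          integral_norm_ft_sq hri hr₂]
        ring

theorem integrable_norm_ft_candidate_mul (hσ₀ : σ₀ ≠ 0) (hσ : σ ≠ 0) (hr : Integrable r)
    (hφ : Integrable φ) : Integrable fun ω => ‖ft (candidate δ σ₀ σ r) ω‖ * ‖ft φ ω‖ := by
  have hft : Integrable (ft (candidate δ σ₀ σ r)) := by
    have hσ_int := (integrable_exp_neg_mul_sq_div_two (NNReal.coe_pos.2 hσ.bot_lt)).ofReal (𝕜 := ℂ)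
    have hσ₀_int :=
      (integrable_exp_neg_mul_sq_div_two (NNReal.coe_pos.2 hσ₀.bot_lt)).ofReal (𝕜 := ℂ)
    refine ((hσ₀_int.const_mul ((1 - δ * ∫ t, r t : ℝ) : ℂ)).add
      ((hσ_int.bdd_mul (continuous_ft hr).aestronglyMeasurable
        (.of_forall (norm_ft_le r))).const_mul (δ : ℂ))).congr (.of_forall fun ω => ?_)
    exact (ft_candidate hσ₀ hσ hr ω).symm
  exact hft.norm.mul_bdd (continuous_ft hφ).norm.aestronglyMeasurable
    (.of_forall fun ω => by simpa only [norm_norm] using norm_ft_le φ ω)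

theorem isAdmissible_candidate {s B m : ℝ} (hs : 0 ≤ s) (hB : 0 < B) (hm : 1 ≤ m) (hσ : σ ≠ 0)
    (hσ₀ : σ₀ = s + 16 * Real.pi / B ^ 4) (hσs : s / m ^ 2 ≤ σ) (hr : ∀ x, 0 ≤ r x)
    (hri : Integrable r) (hr₂ : MemLp r 2) (hδ : 0 ≤ δ) (hδr : δ * ∫ t, r t ≤ 1)
    (hδr₂ : 8 * Real.pi * (δ ^ 2 * m ^ (2 * s)) * ∫ x, r x ^ 2 ≤ B ^ 2) (hφ : Integrable φ) :
    IsAdmissible φ s B (candidate δ σ₀ σ r) := by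
  have hsσ₀ : s < σ₀ := by
    rw [hσ₀]
    exact lt_add_of_pos_right s (by positivity)
  have hσ₀' : σ₀ ≠ 0 := by
    rintro rfl
    exact hs.not_gt hsσ₀
  refine ⟨isDensity_candidate hσ₀' hσ hr hri hδ hδr, ?_,
    integrable_norm_ft_candidate_mul hσ₀' hσ hri hφ⟩
  have hsqrt : √(Real.pi / (σ₀ - s)) = B ^ 2 / 4 := by
    rw [hσ₀, add_sub_cancel_left, Real.sqrt_eq_iff_mul_self_eq (by positivity) (by positivity)]
    field_simp
    ring
  have h := integral_norm_ft_candidate_sq_mul_le hs hm hsσ₀ hσ hσs hr hri hr₂ hδ hδr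
  rw [hsqrt] at h
  linarith

theorem candidate_add (hr : Integrable r) (hk : Integrable k) (hk₀ : ∫ x, k x = 0) :
    candidate δ σ₀ σ (fun x => r x + k x) =
      fun x => candidate δ σ₀ σ r x + δ * (k ⋆ gaussianPDFReal 0 σ) x := by
  ext x
  have hexists := fun {u : ℝ → ℝ} (hu : Integrable u) => convolutionExists_of_bddAbove hu
    (continuous_gaussianPDFReal (σ := σ)) bddAbove_norm_gaussianPDFReal x
  have hadd : ((fun x => r x + k x) ⋆ gaussianPDFReal 0 σ) x =
      (r ⋆ gaussianPDFReal 0 σ) x + (k ⋆ gaussianPDFReal 0 σ) x :=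
    (hexists hr).add_distrib (hexists hk)
  rw [candidate, candidate, hadd, integral_add hr hk, hk₀]
  ring

end Candidates

section Jets

variable {F : Type*} [NormedAddCommGroup F] [NormedSpace ℝ F] {v : ℕ} {S T : Set ℝ}

/-- `f` is `v` times continuously differentiable on the open set `S`, with all derivatives of order
at most `v` bounded at `x ∈ S` by `w x`. -/
structure JetBoundedOn (v : ℕ) (f : ℝ → F) (S : Set ℝ) (w : ℝ → ℝ) : Prop where
  contDiffOn : ContDiffOn ℝ v f S
  norm_iteratedDeriv_le : ∀ j ≤ v, ∀ x ∈ S, ‖iteratedDeriv j f x‖ ≤ w x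

theorem JetBoundedOn.nonneg {f : ℝ → F} {w : ℝ → ℝ} (hf : JetBoundedOn v f S w) {x : ℝ}
    (hx : x ∈ S) : 0 ≤ w x :=
  (norm_nonneg _).trans (hf.norm_iteratedDeriv_le 0 v.zero_le x hx)

theorem JetBoundedOn.mul {f g : ℝ → ℂ} {w₁ w₂ : ℝ → ℝ} (hS : IsOpen S)
    (hf : JetBoundedOn v f S w₁) (hg : JetBoundedOn v g S w₂) :
    JetBoundedOn v (fun x => f x * g x) S fun x => 2 ^ v * (w₁ x * w₂ x) where
  contDiffOn := hf.contDiffOn.mul hg.contDiffOn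
  norm_iteratedDeriv_le j hj x hx := by
    have hdiff := fun {u : ℝ → ℂ} (hu : ContDiffOn ℝ v u S) =>
      (hu.contDiffAt (hS.mem_nhds hx)).of_le (mod_cast hj : ((j : ℕ) : WithTop ℕ∞) ≤ v)
    have hprod : 0 ≤ w₁ x * w₂ x := mul_nonneg (hf.nonneg hx) (hg.nonneg hx)
    calc ‖iteratedDeriv j (f * g) x‖ ≤ ∑ i ∈ range (j + 1), (j.choose i : ℝ) * (w₁ x * w₂ x) := by
          rw [iteratedDeriv_mul (hdiff hf.contDiffOn) (hdiff hg.contDiffOn)]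
          refine norm_sum_le_of_le _ fun i hi => ?_
          rw [norm_mul, norm_mul, Complex.norm_natCast, mul_assoc]
          gcongr
          · exact hf.nonneg hx
          · exact hf.norm_iteratedDeriv_le i ((mem_range_succ_iff.1 hi).trans hj) x hx
          · exact hg.norm_iteratedDeriv_le (j - i) ((j.sub_le i).trans hj) x hx
      _ = 2 ^ j * (w₁ x * w₂ x) := by
          rw [← sum_mul, ← Nat.cast_sum, Nat.sum_range_choose, Nat.cast_pow, Nat.cast_ofNat]
      _ ≤ 2 ^ v * (w₁ x * w₂ x) := by gcongr; norm_num

theorem iteratedDeriv_cexp_mul_I (j : ℕ) :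
    iteratedDeriv j (fun x : ℝ => Complex.exp (x * Complex.I)) =
      fun x : ℝ => Complex.I ^ j * Complex.exp (x * Complex.I) := by
  induction j with
  | zero => simp
  | succ j ih =>
    ext x
    have h : HasDerivAt (fun x : ℝ => (x : ℂ) * Complex.I) (1 * Complex.I) x :=
      (Complex.ofRealCLM.hasDerivAt (x := x)).mul_const _
    rw [iteratedDeriv_succ, ih, (h.cexp.const_mul (Complex.I ^ j)).deriv]
    ring

theorem jetBoundedOn_cexp_mul_I {ρ : ℝ → ℝ} {D : ℝ} (hS : IsOpen S)
    (hρ : JetBoundedOn v ρ S fun _ => D) :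
    JetBoundedOn v (fun ω => Complex.exp (ρ ω * Complex.I)) S
      fun _ => v.factorial * max 1 D ^ v where
  contDiffOn :=
    ((Complex.ofRealCLM.contDiff.comp_contDiffOn hρ.contDiffOn).mul contDiffOn_const).cexp
  norm_iteratedDeriv_le j hj x hx := by
    have hexp : ContDiff ℝ v fun x : ℝ => Complex.exp (x * Complex.I) :=
      (Complex.ofRealCLM.contDiff.mul contDiff_const).cexp
    have hcomp := norm_iteratedFDerivWithin_comp_le (n := j) (C := 1) (D := max 1 D)
      hexp.contDiffOn hρ.contDiffOn (mod_cast hj) uniqueDiffOn_univ hS.uniqueDiffOn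
      (Set.mapsTo_univ _ _) hx
      (fun i _ => by
        rw [iteratedFDerivWithin_univ, norm_iteratedFDeriv_eq_norm_iteratedDeriv,
          iteratedDeriv_cexp_mul_I]
        simp [Complex.norm_exp])
      (fun i hi hij => by
        rw [iteratedFDerivWithin_of_isOpen i hS hx, norm_iteratedFDeriv_eq_norm_iteratedDeriv]
        exact ((hρ.norm_iteratedDeriv_le i (hij.trans hj) x hx).trans (le_max_right 1 D)).trans
          (le_self_pow₀ (le_max_left 1 D) (by lia)))
    rw [iteratedFDerivWithin_of_isOpen j hS hx, norm_iteratedFDeriv_eq_norm_iteratedDeriv,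
      mul_one] at hcomp
    exact hcomp.trans (by gcongr; exact le_max_left 1 D)

theorem jetBoundedOn_of_iteratedDerivWithin {f : ℝ → F} {w : ℝ → ℝ} (hS : IsOpen S) (hST : S ⊆ T)
    (hf : ContDiffOn ℝ v f T) (hfw : ∀ j ≤ v, ∀ x ∈ T, ‖iteratedDerivWithin j f T x‖ ≤ w x) :
    JetBoundedOn v f S w where
  contDiffOn := hf.mono hST
  norm_iteratedDeriv_le j hj x hx := by
    have hT : T =ᶠ[𝓝 x] Set.univ :=
      eventuallyEq_univ.2 (mem_of_superset (hS.mem_nhds hx) hST)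
    have h : iteratedDerivWithin j f T x = iteratedDeriv j f x := by
      rw [iteratedDerivWithin, iteratedFDerivWithin_congr_set hT, ← iteratedDerivWithin,
        iteratedDerivWithin_univ]
    exact h ▸ hfw j hj x (hST hx)

theorem exists_jetBoundedOn_comp_mul {b : ℝ → ℂ} (hb : ContDiff ℝ v b) (hbc : HasCompactSupport b) :
    ∃ C, ∀ c : ℝ, |c| ≤ 1 → JetBoundedOn v (fun ω => b (c * ω)) S fun _ => C := by
  have hbound : ∀ j : Fin (v + 1), ∃ C, ∀ x, ‖iteratedDeriv j b x‖ ≤ C := fun j =>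
    (hasCompactSupport_iteratedDeriv hbc j).exists_bound_of_continuous
      (hb.continuous_iteratedDeriv j (mod_cast j.is_le))
  choose C hC using hbound
  refine ⟨∑ j, C j, fun c hc =>
    ⟨(hb.comp (contDiff_const.mul contDiff_id)).contDiffOn, fun j hj x _ => ?_⟩⟩
  rw [iteratedDeriv_comp_const_smul (hb.of_le (mod_cast hj)), norm_smul, norm_pow]
  calc ‖c‖ ^ j * ‖iteratedDeriv j b (c * x)‖ ≤ 1 * C ⟨j, Nat.lt_succ_of_le hj⟩ := by
        gcongr
        · exact pow_le_one₀ (norm_nonneg c) hc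
        · exact hC ⟨j, Nat.lt_succ_of_le hj⟩ _
    _ ≤ ∑ j, C j := by
        rw [one_mul]
        exact single_le_sum (fun i _ => (norm_nonneg _).trans (hC i 0)) (mem_univ _)

end Jets

section Bands

variable {m A : ℝ} {v : ℕ} {W : ℝ → ℂ}

/-- The dyadic frequency band `m ≤ |ω| ≤ 2m`. -/
def band (m : ℝ) : Set ℝ :=
  {ω | m ≤ |ω| ∧ |ω| ≤ 2 * m}

theorem isClosed_band : IsClosed (band m) :=
  (isClosed_le continuous_const continuous_abs).inter (isClosed_le continuous_abs continuous_const)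

theorem band_subset_Icc : band m ⊆ Set.Icc (-(2 * m)) (2 * m) := fun _ hω => abs_le.1 hω.2

theorem isCompact_band : IsCompact (band m) :=
  isCompact_Icc.of_isClosed_subset isClosed_band band_subset_Icc

theorem volume_real_band_le (hm : 0 ≤ m) : volume.real (band m) ≤ 4 * m := by
  refine (measureReal_mono band_subset_Icc measure_Icc_lt_top.ne).trans_eq ?_
  rw [Real.volume_real_Icc_of_le (by linarith)]
  ring

theorem inv_mul_mem_band_one (hm : 0 < m) {ω : ℝ} : m⁻¹ * ω ∈ band 1 ↔ ω ∈ band m := by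
  simp only [band, Set.mem_ofPred_eq, inv_mul_eq_div, abs_div, abs_of_pos hm, le_div_iff₀ hm,
    div_le_iff₀ hm, one_mul, mul_one]

theorem one_add_sq_rpow_neg_le {α ω : ℝ} (hm : 0 < m) (hα : 0 ≤ α) (hω : ω ∈ band m) :
    (ω ^ 2 + 1) ^ (-(α / 2)) ≤ m ^ (-α) := by
  have hsq : m ^ 2 ≤ ω ^ 2 + 1 := by
    have := pow_le_pow_left₀ hm.le hω.1 2
    rw [sq_abs] at this
    linarith
  calc (ω ^ 2 + 1) ^ (-(α / 2)) ≤ (m ^ 2) ^ (-(α / 2)) :=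
        Real.rpow_le_rpow_of_nonpos (by positivity) hsq (by linarith)
    _ = m ^ (-α) := by
        rw [← Real.rpow_natCast_mul hm.le]
        push_cast
        ring_nf

theorem le_one_add_sq_rpow_neg (a : ℝ) {ω : ℝ} (hm : 1 ≤ m) (hω : ω ∈ band m) :
    5 ^ (-(|a| / 2)) * m ^ (-a) ≤ (ω ^ 2 + 1) ^ (-(a / 2)) := by
  have hm₀ : 0 < m := one_pos.trans_le hm
  have hlow : 1 ≤ (ω ^ 2 + 1) / m ^ 2 := by
    rw [one_le_div₀ (by positivity), ← sq_abs ω]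
    nlinarith [hω.1]
  have hup : (ω ^ 2 + 1) / m ^ 2 ≤ 5 := by
    rw [div_le_iff₀ (by positivity), ← sq_abs ω]
    nlinarith [hω.2, abs_nonneg ω]
  calc 5 ^ (-(|a| / 2)) * m ^ (-a)
      ≤ ((ω ^ 2 + 1) / m ^ 2) ^ (-(|a| / 2)) * m ^ (-a) := by
        gcongr ?_ * _
        exact Real.rpow_le_rpow_of_nonpos (one_pos.trans_le hlow) hup (by linarith [abs_nonneg a])
    _ ≤ ((ω ^ 2 + 1) / m ^ 2) ^ (-(a / 2)) * m ^ (-a) := by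
        gcongr ?_ * _
        exact Real.rpow_le_rpow_of_exponent_le hlow (by linarith [le_abs_self a])
    _ = (ω ^ 2 + 1) ^ (-(a / 2)) := by
        rw [Real.div_rpow (by positivity) (by positivity), ← Real.rpow_natCast_mul hm₀.le,
          show ((2 : ℕ) : ℝ) * -(a / 2) = -a by push_cast; ring, div_mul_cancel₀]
        positivity

/-- `W` is `v` times continuously differentiable, lives on the band `m ≤ |ω| ≤ 2m`, and has all
derivatives of order at most `v` bounded by `A`. -/
structure IsBandMultiplier (v : ℕ) (m A : ℝ) (W : ℝ → ℂ) : Prop where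
  contDiff : ContDiff ℝ v W
  tsupport_subset : tsupport W ⊆ band m
  norm_iteratedDeriv_le : ∀ j ≤ v, ∀ ω, ‖iteratedDeriv j W ω‖ ≤ A

namespace IsBandMultiplier

theorem of_le {u : ℕ} (hW : IsBandMultiplier v m A W) (huv : u ≤ v) : IsBandMultiplier u m A W where
  contDiff := hW.contDiff.of_le (mod_cast huv)
  tsupport_subset := hW.tsupport_subset
  norm_iteratedDeriv_le j hj := hW.norm_iteratedDeriv_le j (hj.trans huv)

theorem nonneg (hW : IsBandMultiplier v m A W) : 0 ≤ A :=
  (norm_nonneg _).trans (hW.norm_iteratedDeriv_le 0 v.zero_le 0)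

theorem hasCompactSupport (hW : IsBandMultiplier v m A W) : HasCompactSupport W :=
  isCompact_band.of_isClosed_subset (isClosed_tsupport W) hW.tsupport_subset

theorem integrable (hW : IsBandMultiplier v m A W) : Integrable W :=
  hW.contDiff.continuous.integrable_of_hasCompactSupport hW.hasCompactSupport

theorem eq_zero_of_notMem (hW : IsBandMultiplier v m A W) {ω : ℝ} (hω : ω ∉ band m) : W ω = 0 :=
  image_eq_zero_of_notMem_tsupport fun h => hω (hW.tsupport_subset h)

theorem integrable_norm_ift_sq_mul (hW : IsBandMultiplier v m A W) :
    Integrable fun x => ‖ift W x‖ ^ 2 * (1 + x ^ (2 * v)) :=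
  (integrable_and_integral_norm_ift_sq_mul hW.contDiff hW.hasCompactSupport).1

theorem integral_norm_iteratedDeriv_sq_le (hW : IsBandMultiplier v m A W) (hm : 0 ≤ m) {j : ℕ}
    (hj : j ≤ v) : ∫ ω, ‖iteratedDeriv j W ω‖ ^ 2 ≤ 4 * m * A ^ 2 := by
  have hzero : ∀ ω ∉ band m, ‖iteratedDeriv j W ω‖ ^ 2 = 0 := fun ω hω => by
    rw [← norm_iteratedFDeriv_eq_norm_iteratedDeriv, image_eq_zero_of_notMem_tsupport fun h =>
      hω (hW.tsupport_subset (tsupport_iteratedFDeriv_subset j h)), norm_zero, zero_pow two_ne_zero]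
  rw [← setIntegral_eq_integral_of_forall_compl_eq_zero hzero]
  refine (Real.le_norm_self _).trans ((norm_setIntegral_le_of_norm_le_const
    (C := A ^ 2) isCompact_band.measure_lt_top fun ω _ => ?_).trans ?_)
  · rw [norm_pow, norm_norm]
    exact pow_le_pow_left₀ (norm_nonneg _) (hW.norm_iteratedDeriv_le j hj ω) 2
  · rw [mul_comm]
    gcongr
    exact volume_real_band_le hm

theorem integral_norm_ift_sq_mul_le (hW : IsBandMultiplier v m A W) (hm : 0 ≤ m) :
    ∫ x, ‖ift W x‖ ^ 2 * (1 + x ^ (2 * v)) ≤ 2 * m * A ^ 2 := by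
  have hsq := fun j (hj : j ≤ v) =>
    ((hW.contDiff.continuous_iteratedDeriv j (mod_cast hj)).memLp_of_hasCompactSupport
      (μ := volume) (p := 2)
      (hasCompactSupport_iteratedDeriv hW.hasCompactSupport j)).integrable_norm_pow two_ne_zero
  have h₀ := hW.integral_norm_iteratedDeriv_sq_le hm v.zero_le
  have hv := hW.integral_norm_iteratedDeriv_sq_le hm le_rfl
  have hint₀ := hsq 0 v.zero_le
  rw [iteratedDeriv_zero] at h₀ hint₀
  calc ∫ x, ‖ift W x‖ ^ 2 * (1 + x ^ (2 * v))
      = (2 * Real.pi)⁻¹ * ((∫ ω, ‖W ω‖ ^ 2) + ∫ ω, ‖iteratedDeriv v W ω‖ ^ 2) := by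
        rw [(integrable_and_integral_norm_ift_sq_mul hW.contDiff hW.hasCompactSupport).2,
          integral_add hint₀ (hsq v le_rfl)]
    _ ≤ (2 * 2)⁻¹ * (4 * m * A ^ 2 + 4 * m * A ^ 2) := by
        gcongr
        exact Real.two_le_pi
    _ = 2 * m * A ^ 2 := by ring

theorem memLp_two_ift (hW : IsBandMultiplier v m A W) : MemLp (ift W) 2 :=
  SparseDeconvolution.memLp_two_ift hW.integrable
    (hW.contDiff.continuous.memLp_of_hasCompactSupport hW.hasCompactSupport)

theorem integral_norm_ift_sq_le (hW : IsBandMultiplier v m A W) (hm : 0 ≤ m) :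
    ∫ x, ‖ift W x‖ ^ 2 ≤ 2 * m * A ^ 2 := by
  refine (integral_mono_of_nonneg (.of_forall fun x => by positivity)
    hW.integrable_norm_ift_sq_mul (.of_forall fun x => ?_)).trans
      (hW.integral_norm_ift_sq_mul_le hm)
  exact le_mul_of_one_le_right (by positivity)
    (le_add_of_nonneg_right ((even_two_mul v).pow_nonneg x))

theorem integrable_and_integral_norm_ift_le (hW : IsBandMultiplier v m A W) (hv : 1 ≤ v)
    (hm : 0 < m) : Integrable (ift W) ∧ ∫ x, ‖ift W x‖ ≤ (A ^ 2 + 2) * √m := by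
  have hW₁ := hW.of_le hv
  have hsqrt := Real.sqrt_pos.2 hm
  have hpoint : ∀ x, ‖ift W x‖ ≤
      ((√m)⁻¹ / 2) * (‖ift W x‖ ^ 2 * (1 + x ^ (2 * 1))) + (√m / 2) * (1 + x ^ 2)⁻¹ := fun x => by
    have hamgm := two_mul_le_add_sq (‖ift W x‖ * (1 + x ^ 2)) (√m)
    rw [mul_one 2]
    field_simp
    linarith
  have hint := (hW₁.integrable_norm_ift_sq_mul.const_mul ((√m)⁻¹ / 2)).add
    (integrable_inv_one_add_sq.const_mul (√m / 2))
  have hift : Integrable (ift W) := hint.mono' (continuous_ift hW.integrable).aestronglyMeasurable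
    (.of_forall hpoint)
  refine ⟨hift, ?_⟩
  calc ∫ x, ‖ift W x‖
      ≤ ((√m)⁻¹ / 2) * (∫ x, ‖ift W x‖ ^ 2 * (1 + x ^ (2 * 1))) + (√m / 2) * Real.pi := by
        rw [← integral_univ_inv_one_add_sq, ← integral_const_mul, ← integral_const_mul,
          ← integral_add (hW₁.integrable_norm_ift_sq_mul.const_mul _)
            (integrable_inv_one_add_sq.const_mul _)]
        exact integral_mono hift.norm hint hpoint
    _ ≤ ((√m)⁻¹ / 2) * (2 * m * A ^ 2) + (√m / 2) * 4 := by
        gcongr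
        · exact hW₁.integral_norm_ift_sq_mul_le hm.le
        · exact Real.pi_le_four
    _ = (A ^ 2 + 2) * √m := by
        field_simp
        rw [Real.sq_sqrt hm.le]
        ring

end IsBandMultiplier

end Bands

section Phase

variable {v : ℕ} {S : Set ℝ} {φ ρ : ℝ → ℝ} {D : ℝ}

/-- The phase factor `φ*/|φ*| = exp (i arg φ*)` of the Fourier transform of `φ`; it is zero where
`φ*` vanishes. -/
noncomputable def phase (φ : ℝ → ℝ) (ω : ℝ) : ℂ :=
  ft φ ω / ‖ft φ ω‖

theorem phase_neg (φ : ℝ → ℝ) (ω : ℝ) : phase φ (-ω) = conj (phase φ ω) := by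
  rw [phase, phase, ft_neg, Complex.norm_conj, map_div₀, Complex.conj_ofReal]

theorem phase_mul_ft_neg (φ : ℝ → ℝ) (ω : ℝ) : phase φ ω * ft φ (-ω) = ‖ft φ ω‖ := by
  rw [phase, ft_neg, div_mul_eq_mul_div, Complex.mul_conj', sq, mul_self_div_self]

theorem phase_eq_exp_arg {ω : ℝ} (hφ : ft φ ω ≠ 0) :
    phase φ ω = Complex.exp ((ft φ ω).arg * Complex.I) := by
  rw [phase, div_eq_iff (mod_cast norm_ne_zero_iff.2 hφ), mul_comm,
    Complex.norm_mul_exp_arg_mul_I]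

theorem jetBoundedOn_phase (hS : IsOpen S) (hφ : ∀ ω ∈ S, ft φ ω ≠ 0)
    (hρ_arg : ∀ ω ∈ S, ρ ω = (ft φ ω).arg) (hρ : JetBoundedOn v ρ S fun _ => D) :
    JetBoundedOn v (phase φ) S fun _ => v.factorial * max 1 D ^ v := by
  have heq : Set.EqOn (phase φ) (fun ω => Complex.exp (ρ ω * Complex.I)) S := fun ω hω => by
    rw [phase_eq_exp_arg (hφ ω hω), ← hρ_arg ω hω]
  have hexp := jetBoundedOn_cexp_mul_I hS hρ
  refine ⟨hexp.contDiffOn.congr heq, fun j hj ω hω => ?_⟩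
  rw [heq.iteratedDeriv_of_isOpen hS j hω]
  exact hexp.norm_iteratedDeriv_le j hj ω hω

theorem exists_isBandMultiplier {b H : ℝ → ℂ} {w : ℝ → ℝ} {ω₀ : ℝ} (hb : ContDiff ℝ v b)
    (hb_supp : tsupport b ⊆ band 1) (hH : JetBoundedOn v H {ω | ω₀ < |ω|} w) :
    ∃ A, ∀ m M, 1 ≤ m → ω₀ < m → (∀ ω ∈ band m, w ω ≤ M) →
      IsBandMultiplier v m (A * M) fun ω => b (m⁻¹ * ω) * H ω := by
  have hS : IsOpen {ω : ℝ | ω₀ < |ω|} := isOpen_lt continuous_const continuous_abs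
  obtain ⟨C, hC⟩ := exists_jetBoundedOn_comp_mul (S := {ω : ℝ | ω₀ < |ω|}) hb
    (isCompact_band.of_isClosed_subset (isClosed_tsupport b) hb_supp)
  refine ⟨2 ^ v * C, fun m M hm hmω₀ hM => ?_⟩
  have hm₀ : 0 < m := one_pos.trans_le hm
  have hband : ∀ ω ∈ band m, ω ∈ {ω : ℝ | ω₀ < |ω|} := fun ω hω => hmω₀.trans_le hω.1
  have hm_mem : m ∈ band m := ⟨le_abs_self m, by rw [abs_of_pos hm₀]; linarith⟩
  have hjet := hC m⁻¹ (by rw [abs_inv, abs_of_pos hm₀]; exact inv_le_one_of_one_le₀ hm)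
  have hC₀ : 0 ≤ C := hjet.nonneg (hband m hm_mem)
  have hM₀ : 0 ≤ M := (hH.nonneg (hband m hm_mem)).trans (hM m hm_mem)
  have hprod := hjet.mul hS hH
  have hsupp : tsupport (fun ω => b (m⁻¹ * ω) * H ω) ⊆ band m := by
    refine tsupport_mul_subset_left.trans (closure_minimal (fun ω hω => ?_) isClosed_band)
    exact (inv_mul_mem_band_one hm₀).1 (hb_supp (subset_tsupport b hω))
  refine ⟨contMDiff_iff_contDiff.1 (contMDiff_of_tsupport fun ω hω =>
    (hprod.contDiffOn.contDiffAt (hS.mem_nhds (hband ω (hsupp hω)))).contMDiffAt), hsupp,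
    fun j hj ω => ?_⟩
  by_cases hω : ω ∈ band m
  · refine (hprod.norm_iteratedDeriv_le j hj ω (hband ω hω)).trans ?_
    rw [mul_assoc]
    gcongr
    exact hM ω hω
  · rw [← norm_iteratedFDeriv_eq_norm_iteratedDeriv, image_eq_zero_of_notMem_tsupport fun h =>
      hω (hsupp (tsupport_iteratedFDeriv_subset j h)), norm_zero]
    positivity

end Phase

section Bump

/-- An even smooth cutoff supported in the band `1 ≤ |u| ≤ 2` and equal to `1` for
`5/4 ≤ |u| ≤ 7/4`; composing with `u ↦ u ^ 2` makes it even. -/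
noncomputable def bandBump (u : ℝ) : ℝ :=
  (⟨1, 3 / 2, one_pos, by norm_num⟩ : ContDiffBump (5 / 2 : ℝ)) (u ^ 2)

variable {u : ℝ}

theorem contDiff_bandBump {n : ℕ∞} : ContDiff ℝ n bandBump :=
  (ContDiffBump.contDiff _).comp (contDiff_id.pow 2)

theorem bandBump_nonneg : 0 ≤ bandBump u := ContDiffBump.nonneg _

theorem bandBump_neg (u : ℝ) : bandBump (-u) = bandBump u := by rw [bandBump, bandBump, neg_sq]

theorem bandBump_eq_one (hu : u ∈ Set.Icc (5 / 4) (7 / 4)) : bandBump u = 1 := by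
  refine ContDiffBump.one_of_mem_closedBall _ ?_
  rw [Metric.mem_closedBall, Real.dist_eq, abs_le]
  constructor <;> nlinarith [hu.1, hu.2]

theorem mem_band_one_of_bandBump_ne_zero (hu : bandBump u ≠ 0) : u ∈ band 1 := by
  have hu' : u ^ 2 ∈ Metric.ball (5 / 2 : ℝ) (3 / 2) := by
    rw [← ContDiffBump.support_eq (⟨1, 3 / 2, one_pos, by norm_num⟩ : ContDiffBump (5 / 2 : ℝ))]
    exact hu
  rw [Metric.mem_ball, Real.dist_eq, abs_lt, ← sq_abs u] at hu'
  exact ⟨by nlinarith [hu'.1, abs_nonneg u], by nlinarith [hu'.2, abs_nonneg u]⟩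

end Bump

section Perturbation

open scoped NNReal

open ProbabilityTheory (gaussianPDFReal integrable_gaussianPDFReal)

variable {v : ℕ} {m A κ : ℝ} {σ : ℝ≥0} {φ g : ℝ → ℝ}

/-- The phase of `φ*`, cut off smoothly to the band `m ≤ |ω| ≤ 2m`. -/
noncomputable def bandPhase (φ : ℝ → ℝ) (m ω : ℝ) : ℂ :=
  (bandBump (m⁻¹ * ω) : ℂ) * phase φ ω

/-- The perturbation with Fourier transform `bandPhase φ m`, which is real since `bandPhase φ m` is
Hermitian. -/
noncomputable def perturbation (φ : ℝ → ℝ) (m x : ℝ) : ℝ :=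
  (ift (bandPhase φ m) x).re

/-- The cutoff `bandBump` damped by a Gaussian factor. -/
noncomputable def dampedBump (κ u : ℝ) : ℝ :=
  bandBump u * Real.exp (-(κ * u ^ 2 / 2))

/-- The Fourier transform of the effect `g ⋆ (k ⋆ γ)` on the observations of the perturbation
`k = perturbation φ m`, smoothed by a centred normal density `γ` of variance `κ / m ^ 2`. -/
noncomputable def dataMultiplier (κ : ℝ) (g φ : ℝ → ℝ) (m ω : ℝ) : ℂ :=
  (dampedBump κ (m⁻¹ * ω) : ℂ) * (phase φ ω * ft g ω)

theorem bandPhase_neg (φ : ℝ → ℝ) (m ω : ℝ) : bandPhase φ m (-ω) = conj (bandPhase φ m ω) := by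
  rw [bandPhase, bandPhase, mul_neg, bandBump_neg, phase_neg, map_mul, Complex.conj_ofReal]

theorem ofReal_perturbation (φ : ℝ → ℝ) (m x : ℝ) :
    (perturbation φ m x : ℂ) = ift (bandPhase φ m) x :=
  ofReal_re_ift (bandPhase_neg φ m) x

theorem abs_perturbation (φ : ℝ → ℝ) (m x : ℝ) :
    |perturbation φ m x| = ‖ift (bandPhase φ m) x‖ := by
  rw [← ofReal_perturbation, Complex.norm_real, Real.norm_eq_abs]

section Norms

variable (hU : IsBandMultiplier v m A (bandPhase φ m))
include hU

theorem integrable_perturbation (hv : 1 ≤ v) (hm : 0 < m) : Integrable (perturbation φ m) :=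
  (hU.integrable_and_integral_norm_ift_le hv hm).1.re

theorem integral_abs_perturbation_le (hv : 1 ≤ v) (hm : 0 < m) :
    ∫ x, |perturbation φ m x| ≤ (A ^ 2 + 2) * √m := by
  simpa only [abs_perturbation] using (hU.integrable_and_integral_norm_ift_le hv hm).2

theorem memLp_two_perturbation : MemLp (perturbation φ m) 2 := hU.memLp_two_ift.re

theorem integral_perturbation_sq_le (hm : 0 ≤ m) :
    ∫ x, perturbation φ m x ^ 2 ≤ 2 * m * A ^ 2 := by
  simpa only [← abs_perturbation, sq_abs] using hU.integral_norm_ift_sq_le hm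

theorem ft_perturbation (hv : 1 ≤ v) (hm : 0 < m) : ft (perturbation φ m) = bandPhase φ m :=
  ft_eq_of_ift_eq hU.contDiff.continuous hU.integrable (integrable_perturbation hU hv hm)
    fun x => (ofReal_perturbation φ m x).symm

theorem integral_perturbation (hv : 1 ≤ v) (hm : 0 < m) : ∫ x, perturbation φ m x = 0 := by
  have hzero : (0 : ℝ) ∉ band m := fun h => hm.not_ge (abs_zero (α := ℝ) ▸ h.1)
  have h := congr_fun (ft_perturbation hU hv hm) 0
  rw [hU.eq_zero_of_notMem hzero, ft] at h
  simp only [Complex.ofReal_zero, mul_zero, zero_mul, Complex.exp_zero, one_mul,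
    integral_complex_ofReal] at h
  exact_mod_cast h

theorem ft_perturbation_convolution (hv : 1 ≤ v) (hm : 0 < m) (hσ : σ ≠ 0)
    (hσκ : (σ : ℝ) = κ / m ^ 2) (ω : ℝ) :
    ft (perturbation φ m ⋆ gaussianPDFReal 0 σ) ω = dampedBump κ (m⁻¹ * ω) * phase φ ω := by
  rw [ft_convolution (integrable_perturbation hU hv hm) (integrable_gaussianPDFReal 0 σ),
    ft_perturbation hU hv hm, ft_gaussianPDFReal hσ, hσκ, bandPhase, dampedBump,
    show κ / m ^ 2 * ω ^ 2 / 2 = κ * (m⁻¹ * ω) ^ 2 / 2 by field_simp]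
  push_cast
  ring

theorem ofReal_convolution_perturbation_convolution {B : ℝ} (hv : 1 ≤ v) (hm : 0 < m) (hσ : σ ≠ 0)
    (hσκ : (σ : ℝ) = κ / m ^ 2) (hg : Integrable g)
    (hW : IsBandMultiplier v m B (dataMultiplier κ g φ m)) (y : ℝ) :
    (((g ⋆ (perturbation φ m ⋆ gaussianPDFReal 0 σ)) y : ℝ) : ℂ) =
      ift (dataMultiplier κ g φ m) y := by
  have hk := integrable_perturbation hU hv hm
  have hh := integrable_convolution_gaussianPDFReal (σ := σ) hk
  have hft : ft (g ⋆ (perturbation φ m ⋆ gaussianPDFReal 0 σ)) = dataMultiplier κ g φ m := by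
    ext ω
    rw [ft_convolution hg hh, ft_perturbation_convolution hU hv hm hσ hσκ, dataMultiplier]
    ring
  rw [← hft] at hW ⊢
  refine (ift_ft ?_ (hg.integrable_convolution _ hh) hW.integrable y).symm
  exact (bddAbove_norm_convolution hk bddAbove_norm_gaussianPDFReal)
    |>.continuous_convolution_right_of_integrable _ hg (continuous_convolution_gaussianPDFReal hk)

end Norms

end Perturbation

section Functional

variable {φ h f : ℝ → ℝ} {s B c : ℝ}

theorem IsAdmissible.integrable_ft_mul (hf : IsAdmissible φ s B f) (hφ : Integrable φ) :
    Integrable fun ω => ft f ω * ft φ (-ω) := by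
  refine hf.integrable_mul.mono' ((continuous_ft hf.isDensity.integrable).mul
    ((continuous_ft hφ).comp continuous_neg)).aestronglyMeasurable (.of_forall fun ω => ?_)
  rw [norm_mul, ft_neg, Complex.norm_conj]

theorem functional_add_const_mul_sub (hφ : Integrable φ) (hh : Integrable h)
    (hf : IsAdmissible φ s B f) (hfh : IsAdmissible φ s B fun x => f x + c * h x) :
    functional φ (fun x => f x + c * h x) - functional φ f = c * functional φ h := by
  rw [functional, functional, functional, ← mul_sub,
    ← integral_sub (hfh.integrable_ft_mul hφ) (hf.integrable_ft_mul hφ), mul_left_comm,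
    ← integral_const_mul (c : ℂ)]
  congr! 3
  rw [ft_add hf.isDensity.integrable (hh.const_mul c), ft_const_mul]
  ring

end Functional

section Separation

open scoped NNReal

open ProbabilityTheory (gaussianPDFReal)

variable {v : ℕ} {m A κ a Cφ : ℝ} {σ : ℝ≥0} {φ p : ℝ → ℝ}

theorem contDiff_dampedBump {n : ℕ∞} : ContDiff ℝ n (dampedBump κ) :=
  contDiff_bandBump.mul (by fun_prop)

theorem dampedBump_nonneg (κ u : ℝ) : 0 ≤ dampedBump κ u :=
  mul_nonneg bandBump_nonneg (Real.exp_pos _).le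

theorem dampedBump_inv_mul_eq_zero (hm : 0 < m) {ω : ℝ} (hω : ω ∉ band m) :
    dampedBump κ (m⁻¹ * ω) = 0 := by
  refine mul_eq_zero_of_left (by_contra fun h => hω ?_) _
  exact (inv_mul_mem_band_one hm).1 (mem_band_one_of_bandBump_ne_zero h)

theorem exp_le_dampedBump (hκ : 0 ≤ κ) {u : ℝ} (hu : u ∈ Set.Icc (5 / 4) (7 / 4)) :
    Real.exp (-(2 * κ)) ≤ dampedBump κ u := by
  rw [dampedBump, bandBump_eq_one hu, one_mul, Real.exp_le_exp]
  have hsq : u ^ 2 ≤ 4 := by nlinarith [hu.1, hu.2]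
  linarith [mul_le_mul_of_nonneg_left hsq hκ]

theorem le_integral_dampedBump_mul (hp : Continuous p) (hm : 0 < m) (hκ : 0 ≤ κ) {c : ℝ}
    (hc : 0 ≤ c) (hpc : ∀ ω ∈ band m, c ≤ p ω) :
    Real.exp (-(2 * κ)) * c * (m / 2) ≤ ∫ ω, dampedBump κ (m⁻¹ * ω) * p ω := by
  have hcont : Continuous fun ω => dampedBump κ (m⁻¹ * ω) * p ω :=
    ((contDiff_dampedBump (n := 0)).continuous.comp (continuous_const_mul _)).mul hp
  have hint : Integrable fun ω => dampedBump κ (m⁻¹ * ω) * p ω :=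
    hcont.integrable_of_hasCompactSupport (.intro isCompact_band fun ω hω => by
      rw [dampedBump_inv_mul_eq_zero hm hω, zero_mul])
  have hnonneg : ∀ ω, 0 ≤ dampedBump κ (m⁻¹ * ω) * p ω := fun ω => by
    by_cases hω : ω ∈ band m
    · exact mul_nonneg (dampedBump_nonneg _ _) (hc.trans (hpc ω hω))
    · rw [dampedBump_inv_mul_eq_zero hm hω, zero_mul]
  have hlow : ∀ ω ∈ Set.Icc (5 / 4 * m) (7 / 4 * m),
      Real.exp (-(2 * κ)) * c ≤ dampedBump κ (m⁻¹ * ω) * p ω := fun ω hω => by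
    have hu : m⁻¹ * ω ∈ Set.Icc (5 / 4) (7 / 4) := by
      rwa [inv_mul_eq_div, Set.mem_Icc, le_div_iff₀ hm, div_le_iff₀ hm]
    have hband : ω ∈ band m := by
      rw [band, Set.mem_ofPred_eq, abs_of_nonneg (by nlinarith [hω.1])]
      constructor <;> linarith [hω.1, hω.2]
    exact mul_le_mul (exp_le_dampedBump hκ hu) (hpc ω hband) hc (dampedBump_nonneg _ _)
  calc Real.exp (-(2 * κ)) * c * (m / 2)
      = ∫ _ in Set.Icc (5 / 4 * m) (7 / 4 * m), Real.exp (-(2 * κ)) * c := by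
        rw [setIntegral_const, Real.volume_real_Icc_of_le (by linarith), smul_eq_mul]
        ring
    _ ≤ ∫ ω in Set.Icc (5 / 4 * m) (7 / 4 * m), dampedBump κ (m⁻¹ * ω) * p ω :=
        setIntegral_mono_on (integrableOn_const measure_Icc_lt_top.ne) hint.integrableOn
          measurableSet_Icc hlow
    _ ≤ ∫ ω, dampedBump κ (m⁻¹ * ω) * p ω :=
        setIntegral_le_integral hint (.of_forall hnonneg)

theorem functional_perturbation_convolution (hU : IsBandMultiplier v m A (bandPhase φ m))
    (hv : 1 ≤ v) (hm : 0 < m) (hσ : σ ≠ 0) (hσκ : (σ : ℝ) = κ / m ^ 2) :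
    functional φ (perturbation φ m ⋆ gaussianPDFReal 0 σ) =
      ((2 * Real.pi)⁻¹ * ∫ ω, dampedBump κ (m⁻¹ * ω) * ‖ft φ ω‖ : ℝ) := by
  rw [functional, one_div, Complex.ofReal_mul, ← integral_complex_ofReal]
  push_cast
  congr! 3 with ω
  rw [ft_perturbation_convolution hU hv hm hσ hσκ, mul_assoc, phase_mul_ft_neg]

theorem exists_mul_rpow_le_norm_functional (hv : 1 ≤ v) (hκ : 0 ≤ κ) (hφ : Integrable φ)
    (hCφ : 0 < Cφ) (hφlow : ∀ ω : ℝ, Cφ * (ω ^ 2 + 1) ^ (-(a / 2)) ≤ ‖ft φ ω‖) :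
    ∃ D > 0, ∀ (m A : ℝ) (σ : ℝ≥0), 1 ≤ m → σ ≠ 0 → (σ : ℝ) = κ / m ^ 2 →
      IsBandMultiplier v m A (bandPhase φ m) →
      D * m ^ (1 - a) ≤ ‖functional φ (perturbation φ m ⋆ gaussianPDFReal 0 σ)‖ := by
  refine ⟨(4 * Real.pi)⁻¹ * Real.exp (-(2 * κ)) * (Cφ * 5 ^ (-(|a| / 2))), by positivity,
    fun m A σ hm hσ hσκ hU => ?_⟩
  have hm₀ : 0 < m := one_pos.trans_le hm
  have hint := le_integral_dampedBump_mul (continuous_ft hφ).norm hm₀ hκ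
    (c := Cφ * (5 ^ (-(|a| / 2)) * m ^ (-a))) (by positivity) fun ω hω =>
      (mul_le_mul_of_nonneg_left (le_one_add_sq_rpow_neg a hm hω) hCφ.le).trans (hφlow ω)
  rw [functional_perturbation_convolution hU hv hm₀ hσ hσκ, Complex.norm_real]
  refine le_trans (le_of_eq ?_)
    ((mul_le_mul_of_nonneg_left hint (by positivity)).trans (Real.le_norm_self _))
  rw [sub_eq_add_neg, Real.rpow_add hm₀, Real.rpow_one, mul_inv, mul_inv]
  ring

end Separation

section Multipliers

variable {v : ℕ} {κ α Cg C D ω₀ : ℝ} {φ g ρ : ℝ → ℝ}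

theorem tsupport_ofReal_dampedBump_subset : tsupport (fun u => (dampedBump κ u : ℂ)) ⊆ band 1 :=
  closure_minimal (fun _ hu => mem_band_one_of_bandBump_ne_zero
    (left_ne_zero_of_mul (Complex.ofReal_ne_zero.1 hu))) isClosed_band

theorem exists_isBandMultiplier_bandPhase
    (hφ : JetBoundedOn v (phase φ) {ω | ω₀ < |ω|} fun _ => D) :
    ∃ A, ∀ m, 1 ≤ m → ω₀ < m → IsBandMultiplier v m A (bandPhase φ m) := by
  have hsupp : tsupport (fun u => (bandBump u : ℂ)) ⊆ band 1 := closure_minimal (fun _ hu =>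
    mem_band_one_of_bandBump_ne_zero (Complex.ofReal_ne_zero.1 hu)) isClosed_band
  obtain ⟨A, hA⟩ := exists_isBandMultiplier
    (Complex.ofRealCLM.contDiff.comp (contDiff_bandBump (n := v))) hsupp hφ
  exact ⟨A * D, fun m hm hω₀ => hA m D hm hω₀ fun _ _ => le_rfl⟩

theorem exists_isBandMultiplier_dataMultiplier
    (hφ : JetBoundedOn v (phase φ) {ω | ω₀ < |ω|} fun _ => D)
    (hg : JetBoundedOn v (ft g) {ω | ω₀ < |ω|} fun ω => C * ‖ft g ω‖) (hC : 0 ≤ C) (hα : 0 ≤ α)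
    (hgup : ∀ ω : ℝ, ‖ft g ω‖ ≤ Cg * (ω ^ 2 + 1) ^ (-(α / 2))) :
    ∃ A, ∀ m, 1 ≤ m → ω₀ < m →
      IsBandMultiplier v m (A * m ^ (-α)) (dataMultiplier κ g φ m) := by
  have hCg : 0 ≤ Cg := by simpa using (norm_nonneg _).trans (hgup 0)
  obtain ⟨A, hA⟩ := exists_isBandMultiplier
    (Complex.ofRealCLM.contDiff.comp (contDiff_dampedBump (κ := κ) (n := v)))
    tsupport_ofReal_dampedBump_subset
    (hφ.mul (isOpen_lt continuous_const continuous_abs) hg)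
  refine ⟨A * (2 ^ v * (D * (C * Cg))), fun m hm hω₀ => ?_⟩
  rw [mul_assoc]
  refine hA m _ hm hω₀ fun ω hω => ?_
  have hD : 0 ≤ D := hφ.nonneg (x := ω) (hω₀.trans_le hω.1)
  calc 2 ^ v * (D * (C * ‖ft g ω‖)) ≤ 2 ^ v * (D * (C * (Cg * m ^ (-α)))) := by
        gcongr
        exact (hgup ω).trans (mul_le_mul_of_nonneg_left
          (one_add_sq_rpow_neg_le (one_pos.trans_le hm) hα hω) hCg)
    _ = 2 ^ v * (D * (C * Cg)) * m ^ (-α) := by ring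

theorem jetBoundedOn_ft {S : Set ℝ} (hg_smooth : ContDiff ℝ v (ft g))
    (hg_derivs : ∀ l, 1 ≤ l → l ≤ v → ∀ ω, ‖iteratedDeriv l (ft g) ω‖ ≤ C * ‖ft g ω‖) :
    JetBoundedOn v (ft g) S fun ω => max 1 C * ‖ft g ω‖ where
  contDiffOn := hg_smooth.contDiffOn
  norm_iteratedDeriv_le j hj ω _ := by
    rcases Nat.eq_zero_or_pos j with rfl | hj₀
    · rw [iteratedDeriv_zero]
      exact le_mul_of_one_le_left (norm_nonneg _) (le_max_left 1 C)
    · exact (hg_derivs j hj₀ hj ω).trans (by gcongr; exact le_max_right 1 C)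

theorem jetBoundedOn_phase_of_arg (hφ : ∀ ω, ft φ ω ≠ 0)
    (hρ_arg : ∀ ω : ℝ, ω₀ ≤ |ω| → ρ ω = (ft φ ω).arg)
    (hρ_smooth : ContDiffOn ℝ v ρ {ω : ℝ | ω₀ ≤ |ω|})
    (hρbdd : ∀ j : ℕ, j ≤ v → ∀ ω : ℝ, ω₀ ≤ |ω| →
      |iteratedDerivWithin j ρ {ω' : ℝ | ω₀ ≤ |ω'|} ω| ≤ D) :
    JetBoundedOn v (phase φ) {ω | ω₀ < |ω|} fun _ => v.factorial * max 1 D ^ v := by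
  have hopen : IsOpen {ω : ℝ | ω₀ < |ω|} := isOpen_lt continuous_const continuous_abs
  have hsub : {ω : ℝ | ω₀ < |ω|} ⊆ {ω | ω₀ ≤ |ω|} := Set.ofPred_subset_ofPred.2 fun _ => le_of_lt
  exact jetBoundedOn_phase hopen (fun ω _ => hφ ω) (fun ω hω => hρ_arg ω (hsub hω))
    (jetBoundedOn_of_iteratedDerivWithin hopen hsub hρ_smooth hρbdd)

end Multipliers

section TwoHypotheses

open scoped NNReal

open ProbabilityTheory (gaussianPDFReal)

variable {v : ℕ} {m A A' B C D s δ μ : ℝ} {σ₀ σ : ℝ≥0} {φ g r : ℝ → ℝ}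

theorem continuous_perturbation (hU : IsBandMultiplier v m A (bandPhase φ m)) :
    Continuous (perturbation φ m) :=
  Complex.continuous_re.comp (continuous_ift hU.integrable)

section Dominated

variable (hU : IsBandMultiplier v m A (bandPhase φ m)) (hr_cont : Continuous r)
  (hr : ∀ x, 0 ≤ r x) (hrk : ∀ x, r x ≤ 2 * |perturbation φ m x|)
include hU hr_cont hr hrk

theorem integrable_and_integral_le_of_le_perturbation (hv : 1 ≤ v) (hm : 0 < m) :
    Integrable r ∧ ∫ x, r x ≤ 2 * ((A ^ 2 + 2) * √m) := by
  have hk := (integrable_perturbation hU hv hm).abs.const_mul 2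
  have hri : Integrable r := hk.mono' hr_cont.aestronglyMeasurable
    (.of_forall fun x => (Real.norm_of_nonneg (hr x)).trans_le (hrk x))
  refine ⟨hri, (integral_mono hri hk hrk).trans ?_⟩
  rw [integral_const_mul]
  gcongr
  exact integral_abs_perturbation_le hU hv hm

theorem memLp_two_and_integral_sq_le_of_le_perturbation (hm : 0 ≤ m) :
    MemLp r 2 ∧ ∫ x, r x ^ 2 ≤ 4 * (2 * m * A ^ 2) := by
  have hk := (memLp_two_perturbation hU).abs.const_mul 2
  have hr₂ : MemLp r 2 := hk.mono' hr_cont.aestronglyMeasurable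
    (.of_forall fun x => (Real.norm_of_nonneg (hr x)).trans_le (hrk x))
  refine ⟨hr₂, ?_⟩
  calc ∫ x, r x ^ 2 ≤ ∫ x, (2 * |perturbation φ m x|) ^ 2 :=
        integral_mono hr₂.integrable_sq hk.integrable_sq fun x => pow_le_pow_left₀ (hr x) (hrk x) 2
    _ = 4 * ∫ x, perturbation φ m x ^ 2 := by
        simp only [mul_pow, sq_abs, integral_const_mul]
        norm_num
    _ ≤ _ := by
        gcongr
        exact integral_perturbation_sq_le hU hm

theorem isAdmissible_candidate_of_le_perturbation (hv : 1 ≤ v) (hm : 1 ≤ m) (hs : 0 ≤ s)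
    (hB : 0 < B) (hσ : σ ≠ 0) (hσ₀ : σ₀ = s + 16 * Real.pi / B ^ 4) (hσs : s / m ^ 2 ≤ σ)
    (hφ : Integrable φ) (hδ : 0 ≤ δ) (hδ₁ : 2 * (A ^ 2 + 2) * (δ * √m) ≤ 1)
    (hδ₂ : 64 * Real.pi * A ^ 2 * (δ * (m ^ s * √m)) ^ 2 ≤ B ^ 2) :
    IsAdmissible φ s B (candidate δ σ₀ σ r) := by
  have hm₀ : 0 < m := one_pos.trans_le hm
  obtain ⟨hri, hmass⟩ := integrable_and_integral_le_of_le_perturbation hU hr_cont hr hrk hv hm₀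
  obtain ⟨hr₂, hmass₂⟩ := memLp_two_and_integral_sq_le_of_le_perturbation hU hr_cont hr hrk hm₀.le
  refine isAdmissible_candidate hs hB hm hσ hσ₀ hσs hr hri hr₂ hδ ?_ ?_ hφ
  · exact (mul_le_mul_of_nonneg_left hmass hδ).trans (by linarith)
  · have hms : m ^ (2 * s) = (m ^ s) ^ 2 := by
      rw [mul_comm]
      exact_mod_cast Real.rpow_mul_natCast hm₀.le s 2
    refine (mul_le_mul_of_nonneg_left hmass₂ (by positivity)).trans (hδ₂.trans' (le_of_eq ?_))
    rw [hms, mul_pow, mul_pow, Real.sq_sqrt hm₀.le]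
    ring

end Dominated

theorem le_two_pow_mul_one_add_pow_mul {y z : ℝ} (hC : 0 ≤ C)
    (hz : C * (y ^ 2 + 1) ^ (-(v : ℝ)) ≤ z) : C ≤ 2 ^ v * (1 + y ^ (2 * v)) * z := by
  have hpos : 0 < (y ^ 2 + 1) ^ v := by positivity
  have hpow : (y ^ 2 + 1) ^ v ≤ 2 ^ v * (1 + y ^ (2 * v)) :=
    calc (y ^ 2 + 1) ^ v ≤ 2 ^ (v - 1) * ((y ^ 2) ^ v + 1 ^ v) :=
          add_pow_le (sq_nonneg y) zero_le_one v
      _ ≤ 2 ^ v * ((y ^ 2) ^ v + 1 ^ v) := by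
        gcongr
        exacts [one_le_two, v.sub_le 1]
      _ = _ := by rw [← pow_mul, one_pow, add_comm]
  rw [Real.rpow_neg (by positivity), Real.rpow_natCast, ← div_eq_mul_inv] at hz
  have hz₀ : 0 ≤ z := hz.trans' (by positivity)
  calc C ≤ z * (y ^ 2 + 1) ^ v := (div_le_iff₀ hpos).1 hz
    _ ≤ z * (2 ^ v * (1 + y ^ (2 * v))) := by gcongr
    _ = _ := mul_comm _ _

theorem sq_mul_le_mul_of_half_le {c y z p γ : ℝ} (hC : 0 < C)
    (hγ : C ≤ 2 ^ v * (1 + y ^ (2 * v)) * γ) (hp : γ / 2 ≤ p) :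
    (c * z) ^ 2 ≤ p * (c ^ 2 * (2 ^ (v + 1) / C) * (z ^ 2 * (1 + y ^ (2 * v)))) := by
  have hpoly : 0 ≤ 2 ^ v * (1 + y ^ (2 * v)) := by
    have := (even_two_mul v).pow_nonneg y
    positivity
  calc (c * z) ^ 2 = (c * z) ^ 2 * (C / C) := by rw [div_self hC.ne', mul_one]
    _ ≤ (c * z) ^ 2 * (2 ^ v * (1 + y ^ (2 * v)) * (2 * p) / C) := by
      gcongr
      exact hγ.trans (mul_le_mul_of_nonneg_left (by linarith) hpoly)
    _ = _ := by ring

theorem exists_isAdmissible_sq_le_sqRisk_of_add_const_mul {n : ℕ} {T : (Fin n → ℝ) → ℂ}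
    (hT : Measurable T) (hg : IsDensity g) (hC : 0 < C)
    (hglow : ∀ y, C * (y ^ 2 + 1) ^ (-(v : ℝ)) ≤ g y) (hφ : Integrable φ) (hμ₀ : 0 ≤ μ)
    (hμ : μ ≤ 1 / 2) {f h : ℝ → ℝ} (hf : IsAdmissible φ s B f)
    (hfh : IsAdmissible φ s B fun x => f x + δ * h x) (hh : Integrable h)
    (hgf : ConvolutionExists g f (ContinuousLinearMap.lsmul ℝ ℝ))
    (hgh : ConvolutionExists g h (ContinuousLinearMap.lsmul ℝ ℝ))
    (hZ : Integrable fun y => (g ⋆ h) y ^ 2 * (1 + y ^ (2 * v)))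
    (hn : (μ * δ) ^ 2 * (2 ^ (v + 1) / C) * (∫ y, (g ⋆ h) y ^ 2 * (1 + y ^ (2 * v))) ≤ (n : ℝ)⁻¹)
    (hD : 0 ≤ D) (hgap : 4 * D ≤ ‖δ * functional φ h‖) :
    ∃ f', IsAdmissible φ s B f' ∧
      ENNReal.ofReal (D ^ 2) ≤
        sqRisk T (fun y => ∏ i, mixDensity μ g f' (y i)) (functional φ f') := by
  have hhalf := half_mul_le_mixDensity hg.nonneg hf.isDensity.nonneg hμ₀ hμ
  have hpos : ∀ y, 0 < mixDensity μ g f y := fun y =>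
    (half_pos ((mul_pos hC (by positivity)).trans_le (hglow y))).trans_le (hhalf y)
  have hchi : ∀ y, (mixDensity μ g f y - mixDensity μ g (fun x => f x + δ * h x) y) ^ 2 ≤
      mixDensity μ g f y *
        ((μ * δ) ^ 2 * (2 ^ (v + 1) / C) * ((g ⋆ h) y ^ 2 * (1 + y ^ (2 * v)))) := fun y => by
    rw [mixDensity_add_const_mul (hgf y) (hgh y), sub_add_cancel_left, neg_sq]
    exact sq_mul_le_mul_of_half_le hC (le_two_pow_mul_one_add_pow_mul hC.le (hglow y)) (hhalf y)
  have hμ₁ : μ ≤ 1 := hμ.trans one_half_lt_one.le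
  rcases sq_le_sqRisk_pi_or_sq_le_sqRisk_pi hT.aestronglyMeasurable
    (isDensity_mixDensity hg hf.isDensity hμ₀ hμ₁) (isDensity_mixDensity hg hfh.isDensity hμ₀ hμ₁)
    hpos (hZ.const_mul _) hchi (by rwa [integral_const_mul, Fintype.card_fin]) hD
    (hgap.trans_eq (congr_arg _ (functional_add_const_mul_sub hφ hh hf hfh).symm))
    with hrisk | hrisk
  exacts [⟨_, hf, hrisk⟩, ⟨_, hfh, hrisk⟩]

theorem exists_isAdmissible_sq_le_sqRisk {n : ℕ} {T : (Fin n → ℝ) → ℂ} (hT : Measurable T)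
    (hg : IsDensity g) (hC : 0 < C) (hglow : ∀ y, C * (y ^ 2 + 1) ^ (-(v : ℝ)) ≤ g y)
    (hφ : Integrable φ) (hv : 1 ≤ v) (hm : 1 ≤ m) (hs : 0 ≤ s) (hB : 0 < B)
    (hU : IsBandMultiplier v m A (bandPhase φ m))
    (hW : IsBandMultiplier v m A' (dataMultiplier (s + 1) g φ m)) (hμ₀ : 0 ≤ μ) (hμ : μ ≤ 1 / 2)
    (hδ : 0 ≤ δ) (hδ₁ : 2 * (A ^ 2 + 2) * (δ * √m) ≤ 1)
    (hδ₂ : 64 * Real.pi * A ^ 2 * (δ * (m ^ s * √m)) ^ 2 ≤ B ^ 2)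
    (hδ₃ : (μ * δ) ^ 2 * (2 ^ (v + 1) / C) * (2 * m * A' ^ 2) ≤ (n : ℝ)⁻¹) (hD : 0 ≤ D)
    (hσ : σ ≠ 0) (hσκ : (σ : ℝ) = (s + 1) / m ^ 2)
    (hgap : 4 * D ≤ δ * ‖functional φ (perturbation φ m ⋆ gaussianPDFReal 0 σ)‖) :
    ∃ f, IsAdmissible φ s B f ∧
      ENNReal.ofReal (D ^ 2) ≤
        sqRisk T (fun y => ∏ i, mixDensity μ g f (y i)) (functional φ f) := by
  have hm₀ : 0 < m := one_pos.trans_le hm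
  have hk := integrable_perturbation hU hv hm₀
  have hσs : s / m ^ 2 ≤ σ := by
    rw [hσκ]
    gcongr
    linarith
  obtain ⟨σ₀, hσ₀⟩ : ∃ σ₀ : ℝ≥0, (σ₀ : ℝ) = s + 16 * Real.pi / B ^ 4 :=
    ⟨⟨_, by positivity⟩, rfl⟩
  have hadm := fun r hr_cont hr hrk => isAdmissible_candidate_of_le_perturbation (r := r) hU hr_cont
    hr hrk hv hm hs hB hσ hσ₀ hσs hφ hδ hδ₁ hδ₂
  have hf := hadm (fun x => |perturbation φ m x|) (continuous_perturbation hU).abs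
    (fun x => abs_nonneg _) (fun x => by linarith [abs_nonneg (perturbation φ m x)])
  have hfh := hadm (fun x => |perturbation φ m x| + perturbation φ m x)
    ((continuous_perturbation hU).abs.add (continuous_perturbation hU))
    (fun x => by linarith [neg_abs_le (perturbation φ m x)])
    (fun x => by linarith [le_abs_self (perturbation φ m x)])
  rw [candidate_add hk.abs hk (integral_perturbation hU hv hm₀)] at hfh
  have hZ : ∀ y, (g ⋆ (perturbation φ m ⋆ gaussianPDFReal 0 σ)) y ^ 2 =
      ‖ift (dataMultiplier (s + 1) g φ m) y‖ ^ 2 := fun y => by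
    rw [← ofReal_convolution_perturbation_convolution hU hv hm₀ hσ hσκ hg.integrable hW,
      Complex.norm_real, Real.norm_eq_abs, sq_abs]
  refine exists_isAdmissible_sq_le_sqRisk_of_add_const_mul hT hg hC hglow hφ hμ₀ hμ hf hfh
    (integrable_convolution_gaussianPDFReal hk)
    (convolutionExists_of_bddAbove hg.integrable (continuous_candidate hk.abs)
      (bddAbove_norm_candidate hk.abs))
    (convolutionExists_of_bddAbove hg.integrable (continuous_convolution_gaussianPDFReal hk)
      (bddAbove_norm_convolution hk bddAbove_norm_gaussianPDFReal)) ?_ ?_ hD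
    (by rwa [norm_mul, Complex.norm_real, Real.norm_of_nonneg hδ])
  · simpa only [hZ] using hW.integrable_norm_ift_sq_mul
  · simp only [hZ]
    exact (mul_le_mul_of_nonneg_left (hW.integral_norm_ift_sq_mul_le hm₀.le)
      (by positivity)).trans hδ₃

end TwoHypotheses

section LowerBound

open scoped NNReal

theorem exists_pos_mul_le_and_sq_mul_le (K₁ K₂ K₃ : ℝ) {L : ℝ} (hL : 0 < L) :
    ∃ c > 0, K₁ * c ≤ 1 ∧ K₂ * c ^ 2 ≤ L ∧ K₃ * c ^ 2 ≤ 1 := by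
  have hsmall : ∀ (K l : ℝ) (j : ℕ), j ≠ 0 → 0 < l → ∀ᶠ c in 𝓝[>] (0 : ℝ), K * c ^ j ≤ l :=
    fun K l j hj hl => by
      have hcont : Continuous fun c : ℝ => K * c ^ j := by fun_prop
      refine nhdsWithin_le_nhds ((hcont.tendsto 0).eventually_le_const ?_)
      rwa [zero_pow hj, mul_zero]
  obtain ⟨c, hc, hc₁, hc₂, hc₃⟩ := (eventually_mem_nhdsWithin.and <|
    (hsmall K₁ 1 1 one_ne_zero one_pos).and <|
    (hsmall K₂ L 2 two_ne_zero hL).and (hsmall K₃ 1 2 two_ne_zero one_pos)).exists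
  exact ⟨c, hc, by simpa only [pow_one] using hc₁, hc₂, hc₃⟩

theorem exists_rate_exponents {x s α a : ℝ} (hx : 0 < x) (hs : 0 ≤ s) (hα : 0 ≤ α)
    (ha : s + α = 0 → a < α + 1 / 2) :
    ∃ e > 0, ∃ t, t + e * (s + 1 / 2) ≤ 0 ∧ x + 2 * t + e * (1 - 2 * α) ≤ 0 ∧
      2 * (t + e * (1 - a)) = -(x * (2 * s + 2 * a - 1) / (2 * s + 2 * α)) := by
  rcases (add_nonneg hs hα).eq_or_lt with hsα | hsα
  -- For `s = α = 0` the right-hand side is the junk value `0`: the risk does not tend to zero.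
  · obtain ⟨rfl, rfl⟩ : s = 0 ∧ α = 0 := ⟨by linarith, by linarith⟩
    have ha' : 0 < 1 - 2 * a := by linarith [ha hsα.symm]
    refine ⟨x / (1 - 2 * a), by positivity, -(x + x / (1 - 2 * a)) / 2, by linarith,
      by linarith, ?_⟩
    simp only [mul_zero, add_zero, div_zero, neg_zero]
    field_simp
    ring
  · have hd : 0 < 2 * s + 2 * α := by linarith
    refine ⟨x / (2 * s + 2 * α), by positivity, -(x / (2 * s + 2 * α) * (s + 1 / 2)),
      by linarith, le_of_eq ?_, ?_⟩ <;>
    · field_simp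
      ring

variable {v : ℕ} {a α s B Cg Cg' Cg'' Cφ D ω₀ : ℝ} {φ g : ℝ → ℝ} (hg : IsDensity g)
  (hCg : 0 < Cg) (hglow : ∀ y, Cg * (y ^ 2 + 1) ^ (-(v : ℝ)) ≤ g y) (hv : 1 ≤ v)
  (hg_jet : JetBoundedOn v (ft g) {ω | ω₀ < |ω|} fun ω => Cg' * ‖ft g ω‖) (hCg' : 0 ≤ Cg')
  (hα : 0 ≤ α) (hgup : ∀ ω : ℝ, ‖ft g ω‖ ≤ Cg'' * (ω ^ 2 + 1) ^ (-(α / 2)))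
  (hφ : Integrable φ) (hφ_jet : JetBoundedOn v (phase φ) {ω | ω₀ < |ω|} fun _ => D)
  (hCφ : 0 < Cφ) (hφlow : ∀ ω : ℝ, Cφ * (ω ^ 2 + 1) ^ (-(a / 2)) ≤ ‖ft φ ω‖) (hs : 0 ≤ s)
  (hB : 0 < B)
include hg hCg hglow hv hg_jet hCg' hα hgup hφ hφ_jet hCφ hφlow hs hB

theorem exists_forall_isAdmissible_sq_le_sqRisk :
    ∃ D₀ > 0, ∀ m, 1 ≤ m → ω₀ < m → ∀ (n : ℕ) (μ τ : ℝ), 0 ≤ μ → μ ≤ 1 / 2 → 0 ≤ τ →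
      τ * (m ^ s * √m) ≤ 1 → (μ * τ) ^ 2 * m ^ (1 - 2 * α) ≤ (n : ℝ)⁻¹ →
      ∀ T : (Fin n → ℝ) → ℂ, Measurable T → ∃ f, IsAdmissible φ s B f ∧
        ENNReal.ofReal ((D₀ * (τ * m ^ (1 - a))) ^ 2) ≤
          sqRisk T (fun y => ∏ i, mixDensity μ g f (y i)) (functional φ f) := by
  obtain ⟨A, hU⟩ := exists_isBandMultiplier_bandPhase hφ_jet
  obtain ⟨A', hW⟩ := exists_isBandMultiplier_dataMultiplier (κ := s + 1) hφ_jet hg_jet hCg' hα hgup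
  obtain ⟨D₁, hD₁, hsep⟩ := exists_mul_rpow_le_norm_functional hv (add_nonneg hs zero_le_one) hφ
    hCφ hφlow
  obtain ⟨c, hc, hc₁, hc₂, hc₃⟩ := exists_pos_mul_le_and_sq_mul_le (2 * (A ^ 2 + 2))
    (64 * Real.pi * A ^ 2) (2 ^ (v + 2) / Cg * A' ^ 2) (pow_pos hB 2)
  refine ⟨c * D₁ / 4, by positivity, fun m hm hω₀ n μ τ hμ₀ hμ hτ hτ₁ hτ₂ T hT => ?_⟩
  have hm₀ : 0 < m := one_pos.trans_le hm
  obtain ⟨σ, hσκ⟩ : ∃ σ : ℝ≥0, (σ : ℝ) = (s + 1) / m ^ 2 := ⟨⟨_, by positivity⟩, rfl⟩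
  have hσ : σ ≠ 0 := NNReal.coe_ne_zero.1 (by rw [hσκ]; positivity)
  have hτm : τ * √m ≤ 1 := hτ₁.trans' <| mul_le_mul_of_nonneg_left
    (le_mul_of_one_le_left (Real.sqrt_nonneg m) (Real.one_le_rpow hm hs)) hτ
  have hmα : m ^ (1 - 2 * α) = m * (m ^ (-α)) ^ 2 := by
    rw [← Real.rpow_mul_natCast hm₀.le, sub_eq_add_neg, Real.rpow_add hm₀, Real.rpow_one]
    congr 2
    push_cast
    ring
  refine exists_isAdmissible_sq_le_sqRisk (δ := c * τ) hT hg hCg hglow hφ hv hm hs hB (hU m hm hω₀)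
    (hW m hm hω₀) hμ₀ hμ (by positivity) ?_ ?_ ?_ (by positivity) hσ hσκ ?_
  · calc 2 * (A ^ 2 + 2) * (c * τ * √m) = 2 * (A ^ 2 + 2) * c * (τ * √m) := by ring
      _ ≤ 1 := mul_le_one₀ hc₁ (by positivity) hτm
  · calc 64 * Real.pi * A ^ 2 * (c * τ * (m ^ s * √m)) ^ 2
        = 64 * Real.pi * A ^ 2 * c ^ 2 * (τ * (m ^ s * √m)) ^ 2 := by ring
      _ ≤ B ^ 2 * 1 := mul_le_mul hc₂ (pow_le_one₀ (by positivity) hτ₁) (sq_nonneg _) (sq_nonneg B)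
      _ = B ^ 2 := mul_one _
  · calc (μ * (c * τ)) ^ 2 * (2 ^ (v + 1) / Cg) * (2 * m * (A' * m ^ (-α)) ^ 2)
        = 2 ^ (v + 2) / Cg * A' ^ 2 * c ^ 2 * ((μ * τ) ^ 2 * m ^ (1 - 2 * α)) := by rw [hmα]; ring
      _ ≤ 1 * (n : ℝ)⁻¹ := mul_le_mul hc₃ hτ₂ (by positivity) zero_le_one
      _ = (n : ℝ)⁻¹ := one_mul _
  · calc 4 * (c * D₁ / 4 * (τ * m ^ (1 - a))) = c * τ * (D₁ * m ^ (1 - a)) := by ring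
      _ ≤ _ := mul_le_mul_of_nonneg_left (hsep m A σ hm hσ hσκ (hU m hm hω₀)) (by positivity)

theorem exists_eventually_isAdmissible_rpow_le_sqRisk {ν : ℝ} (hν : 1 / 2 < ν) (hν₁ : ν < 1)
    (ha : s + α = 0 → a < α + 1 / 2) :
    ∃ C > 0, ∀ᶠ n : ℕ in atTop, ∀ T : (Fin n → ℝ) → ℂ, Measurable T →
      ∃ f, IsAdmissible φ s B f ∧
        ENNReal.ofReal (C * (n : ℝ) ^ (-((2 * ν - 1) * (2 * s + 2 * a - 1) / (2 * s + 2 * α)))) ≤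
          sqRisk T (fun y => ∏ i, mixDensity ((n : ℝ) ^ (ν - 1)) g f (y i)) (functional φ f) := by
  obtain ⟨D₀, hD₀, hcore⟩ := exists_forall_isAdmissible_sq_le_sqRisk hg hCg hglow hv hg_jet hCg'
    hα hgup hφ hφ_jet hCφ hφlow hs hB
  obtain ⟨e, he, t, hsob, hchi, hrate⟩ :=
    exists_rate_exponents (x := 2 * ν - 1) (by linarith) hs hα ha
  have hcast := tendsto_natCast_atTop_atTop (R := ℝ)
  have hm_tendsto := (tendsto_rpow_atTop he).comp hcast
  have hμ_tendsto := (tendsto_rpow_neg_atTop (sub_pos.2 hν₁)).comp hcast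
  refine ⟨D₀ ^ 2, by positivity, ?_⟩
  filter_upwards [hm_tendsto.eventually_ge_atTop 1, hm_tendsto.eventually_gt_atTop ω₀,
    hμ_tendsto.eventually_le_const one_half_pos, eventually_ge_atTop 1] with n hm hmω hμ hn T hT
  rw [Function.comp_apply, neg_sub] at hμ
  have hn₁ : (1 : ℝ) ≤ n := by exact_mod_cast hn
  have hn₀ : (0 : ℝ) < n := one_pos.trans_le hn₁
  have hτ : (n : ℝ) ^ t * (((n : ℝ) ^ e) ^ s * √((n : ℝ) ^ e)) ≤ 1 := by
    rw [Real.sqrt_eq_rpow, ← Real.rpow_mul hn₀.le, ← Real.rpow_mul hn₀.le, ← Real.rpow_add hn₀,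
      ← Real.rpow_add hn₀]
    exact Real.rpow_le_one_of_one_le_of_nonpos hn₁ (by linarith)
  have hχ : ((n : ℝ) ^ (ν - 1) * (n : ℝ) ^ t) ^ 2 * ((n : ℝ) ^ e) ^ (1 - 2 * α) ≤ (n : ℝ)⁻¹ := by
    rw [← Real.rpow_neg_one, ← Real.rpow_add hn₀, ← Real.rpow_mul_natCast hn₀.le,
      ← Real.rpow_mul hn₀.le, ← Real.rpow_add hn₀]
    exact Real.rpow_le_rpow_of_exponent_le hn₁ (by push_cast; linarith)
  have hrisk_eq : (D₀ * ((n : ℝ) ^ t * ((n : ℝ) ^ e) ^ (1 - a))) ^ 2 =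
      D₀ ^ 2 * (n : ℝ) ^ (-((2 * ν - 1) * (2 * s + 2 * a - 1) / (2 * s + 2 * α))) := by
    rw [← hrate, mul_pow, ← Real.rpow_mul hn₀.le, ← Real.rpow_add hn₀,
      ← Real.rpow_mul_natCast hn₀.le, Nat.cast_ofNat, mul_comm (2 : ℝ)]
  rw [← hrisk_eq]
  exact hcore _ hm hmω n _ _ (by positivity) hμ (by positivity) hτ hχ T hT

end LowerBound

end SparseDeconvolution

open SparseDeconvolution in
theorem stmt_15_general {g φ : ℝ → ℝ} {ν : ℝ} (hν : 1 / 2 < ν) (hν1 : ν < 1)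
    (hg_int : Integrable g) (hg_one : (∫ x, g x) = 1)
    {Cg1 vs : ℝ} (hCg1 : 0 < Cg1) (hglow : ∀ θ : ℝ, Cg1 * (θ ^ 2 + 1) ^ (-vs) ≤ g θ)
    {v₁ : ℕ} (hv₁ : 1 ≤ v₁) (hvs : vs ≤ v₁) {Cg2 : ℝ}
    (hg_smooth : ContDiff ℝ v₁ (ft g))
    (hg_derivs : ∀ l : ℕ, 1 ≤ l → l ≤ v₁ → ∀ ω : ℝ, ‖iteratedDeriv l (ft g) ω‖ ≤ Cg2 * ‖ft g ω‖)
    {ω₀ ρbar : ℝ} {ρ : ℝ → ℝ} (hρ_arg : ∀ ω : ℝ, ω₀ ≤ |ω| → ρ ω = (ft φ ω).arg)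
    (hρ_smooth : ContDiffOn ℝ v₁ ρ {ω : ℝ | ω₀ ≤ |ω|})
    (hρbdd : ∀ j : ℕ, j ≤ v₁ → ∀ ω : ℝ, ω₀ ≤ |ω| →
      |iteratedDerivWithin j ρ {ω' : ℝ | ω₀ ≤ |ω'|} ω| ≤ ρbar)
    {Cg3 α : ℝ} (hα : 0 ≤ α) (hgup : ∀ ω : ℝ, ‖ft g ω‖ ≤ Cg3 * (ω ^ 2 + 1) ^ (-(α / 2)))
    {Cφ1 a : ℝ} (hCφ1 : 0 < Cφ1) (hφlow : ∀ ω : ℝ, Cφ1 * (ω ^ 2 + 1) ^ (-(a / 2)) ≤ ‖ft φ ω‖)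
    {s B : ℝ} (hs : 0 ≤ s) (hB : 0 < B) (ha : s + α = 0 → a < α + 1 / 2) :
    ∃ C : ℝ, 0 < C ∧ ∃ N : ℕ, ∀ n : ℕ, N ≤ n →
      ∀ T : (Fin n → ℝ) → ℂ, Measurable T →
        ∃ f₀ : ℝ → ℝ, (∀ x, 0 ≤ f₀ x) ∧ Integrable f₀ ∧ (∫ x, f₀ x) = 1 ∧
          (∫ ω : ℝ, ‖ft f₀ ω‖ ^ 2 * (ω ^ 2 + 1) ^ s) ≤ B ^ 2 ∧
          Integrable (fun ω : ℝ => ‖ft f₀ ω‖ * ‖ft φ ω‖) ∧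
          ENNReal.ofReal
              (C * (n : ℝ) ^
                (-((2 * ν - 1) * (2 * s + 2 * a - 1) / (2 * s + 2 * α)))) ≤
            ∫⁻ y : Fin n → ℝ,
              ENNReal.ofReal
                (‖T y - (1 / (2 * Real.pi) : ℂ) * ∫ ω : ℝ, ft f₀ ω * ft φ (-ω)‖ ^ 2 *
                  ∏ i : Fin n,
                    ((1 - (n : ℝ) ^ (ν - 1)) * g (y i) +
                      (n : ℝ) ^ (ν - 1) * ∫ θ : ℝ, g (y i - θ) * f₀ θ)) := by
  have hg : IsDensity g :=
    ⟨fun x => (hglow x).trans' (by positivity), hg_int, hg_one⟩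
  have hglow' (y : ℝ) : Cg1 * (y ^ 2 + 1) ^ (-(v₁ : ℝ)) ≤ g y := (hglow y).trans' <| by
    gcongr
    linarith [sq_nonneg y]
  have hφ_ne (ω : ℝ) : ft φ ω ≠ 0 :=
    norm_pos_iff.1 ((hφlow ω).trans_lt' (by positivity))
  obtain ⟨C, hC, hbound⟩ := exists_eventually_isAdmissible_rpow_le_sqRisk hg hCg1 hglow' hv₁
    (jetBoundedOn_ft hg_smooth hg_derivs) (by positivity) hα hgup
    (integrable_of_ft_ne_zero (hφ_ne 0)) (jetBoundedOn_phase_of_arg hφ_ne hρ_arg hρ_smooth hρbdd)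
    hCφ1 hφlow hs hB hν hν1 ha
  obtain ⟨N, hN⟩ := Filter.eventually_atTop.1 hbound
  refine ⟨C, hC, N, fun n hn T hT => ?_⟩
  obtain ⟨f, hf, hrisk⟩ := hN n hn T hT
  refine ⟨f, hf.isDensity.nonneg, hf.isDensity.integrable, hf.isDensity.integral_eq_one,
    hf.sobolev, hf.integrable_mul, hrisk.trans_eq ?_⟩
  simp only [sqRisk, functional, mixDensity, convolution_lsmul_swap, smul_eq_mul]

theorem stmt_15 (g φ : ℝ → ℝ) (ν : ℝ) (hν : 1 / 2 < ν) (hν1 : ν < 1)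
    (hg_nonneg : ∀ x, 0 ≤ g x) (hg_int : Integrable g) (hg_one : (∫ x, g x) = 1)
    (hg_bdd : BddAbove (Set.range g))
    (Cg1 vs : ℝ) (hCg1 : 0 < Cg1) (hvs : 1 ≤ vs)
    (hglow : ∀ θ : ℝ, Cg1 * (θ ^ 2 + 1) ^ (-vs) ≤ g θ)
    (v₁ : ℕ) (hv₁ : v₁ = ⌈vs⌉₊)
    (Cg2 : ℝ)
    (hg_smooth : ContDiff ℝ ((v₁ : ℕ) : ℕ∞) (ft g))
    (hg_derivs : ∀ l : ℕ, 1 ≤ l → l ≤ v₁ →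
      ∀ ω : ℝ, ‖iteratedDeriv l (ft g) ω‖ ≤ Cg2 * ‖ft g ω‖)
    (ω₀ ρbar : ℝ) (hω₀ : 0 < ω₀)
    (ρ : ℝ → ℝ)
    (hρ_arg : ∀ ω : ℝ, ω₀ ≤ |ω| → ρ ω = (ft φ ω).arg)
    (hρ_smooth : ContDiffOn ℝ ((v₁ : ℕ) : ℕ∞) ρ {ω : ℝ | ω₀ ≤ |ω|})
    (hρbdd : ∀ j : ℕ, j ≤ v₁ → ∀ ω : ℝ, ω₀ ≤ |ω| →
      |iteratedDerivWithin j ρ {ω' : ℝ | ω₀ ≤ |ω'|} ω| ≤ ρbar)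
    (Cg3 α : ℝ) (hCg3 : 0 < Cg3) (hα : 0 ≤ α)
    (hgup : ∀ ω : ℝ, ‖ft g ω‖ ≤ Cg3 * (ω ^ 2 + 1) ^ (-(α / 2)))
    (Cφ1 a : ℝ) (hCφ1 : 0 < Cφ1) (ha : a < α + 1 / 2)
    (hφlow : ∀ ω : ℝ, Cφ1 * (ω ^ 2 + 1) ^ (-(a / 2)) ≤ ‖ft φ ω‖) :
    ∀ s B : ℝ, 0 ≤ s → 0 < B →
      ∃ C : ℝ, 0 < C ∧ ∃ N : ℕ, ∀ n : ℕ, N ≤ n →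
        ∀ T : (Fin n → ℝ) → ℂ, Measurable T →
          ∃ f₀ : ℝ → ℝ, (∀ x, 0 ≤ f₀ x) ∧ Integrable f₀ ∧ (∫ x, f₀ x) = 1 ∧
            (∫ ω : ℝ, ‖ft f₀ ω‖ ^ 2 * (ω ^ 2 + 1) ^ s) ≤ B ^ 2 ∧
            Integrable (fun ω : ℝ => ‖ft f₀ ω‖ * ‖ft φ ω‖) ∧
            ENNReal.ofReal
                (C * (n : ℝ) ^
                  (-((2 * ν - 1) * (2 * s + 2 * a - 1) / (2 * s + 2 * α)))) ≤
              ∫⁻ y : Fin n → ℝ,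
                ENNReal.ofReal
                  (‖T y - (1 / (2 * Real.pi) : ℂ) * ∫ ω : ℝ, ft f₀ ω * ft φ (-ω)‖ ^ 2 *
                    ∏ i : Fin n,
                      ((1 - (n : ℝ) ^ (ν - 1)) * g (y i) +
                        (n : ℝ) ^ (ν - 1) * ∫ θ : ℝ, g (y i - θ) * f₀ θ)) :=
  fun _ _ hs hB => stmt_15_general hν hν1 hg_int hg_one hCg1 hglow
    (hv₁ ▸ Nat.one_le_ceil_iff.2 (by linarith)) (hv₁ ▸ Nat.le_ceil vs) hg_smooth hg_derivs
    hρ_arg hρ_smooth hρbdd hα hgup hCφ1 hφlow hs hB fun _ => ha
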